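/- arXiv:2003.07265 — 3 statements merged into one kernel-verified Lean document; each statement's English description precedes it below -/
import Mathlib

section
/- Let Ω ⊂ ℝⁿ be a bounded domain with B̄(x0,1) ⊆ Ω and d̂(x0) ≥ 15, let (γ_y)_{y∈Ω̂} be a path system, let μ0 be a nontrivial finite positive Radon measure on Ω satisfying d_Ω̂ ∈ L¹(μ0), and define the weight w0(x) := I1μ0(x) + ω(x) d̂(x)^{−n+1}. Then for every κ > 0 and every finite signed Radon measure μ on Ω with μ(Ω) = 0 and |μ| ≤ κ μ0, there exists a measurable vector field u : Ω → ℝⁿ with |u| ≤ C κ w0 almost everywhere on Ω such that ∫_Ω u·∇φ dx = −∫_Ω φ dμ for every Lipschitz function φ : ℝⁿ → ℝ. -/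
open MeasureTheory Metric Set
open scoped RealInnerProductSpace ENNReal NNReal

noncomputable section

/-- `ℝⁿ` as a Euclidean space. -/
abbrev En (n : ℕ) := EuclideanSpace ℝ (Fin n)

/-- The geodesic distance, within the set `U`, from the point `x` to the base point `x0`:
the infimum of the lengths (total variations) of rectifiable curves joining `x` to `x0`
inside `U` (non-rectifiable curves have infinite length, so they do not affect the
infimum). -/
def geoDist {X : Type*} [PseudoEMetricSpace X] (U : Set X) (x0 x : X) : ℝ≥0∞ :=
  ⨅ (γ : ℝ → X) (_ : ContinuousOn γ (Set.Icc 0 1)) (_ : Set.MapsTo γ (Set.Icc 0 1) U)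
    (_ : γ 0 = x) (_ : γ 1 = x0), eVariationOn γ (Set.Icc 0 1)

/-- The open measurable cover `Ω̂` associated with a measurable cover `Ω̃`:
`Ω̂ = {x ∈ Ω̃ : dist(x, ℝⁿ \ Ω̃) > 0}`. -/
def hatSet {n : ℕ} (Ot : Set (En n)) : Set (En n) :=
  {x ∈ Ot | 0 < Metric.infDist x Otᶜ}

/-- The integral `∫_s f dμ` of a function against a signed measure, defined through the
Jordan decomposition of `μ`. -/
def signedIntegral {n : ℕ} (μ : MeasureTheory.SignedMeasure (En n)) (s : Set (En n))
    (f : En n → ℝ) : ℝ :=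
  (∫ x in s, f x ∂μ.toJordanDecomposition.posPart) -
    ∫ x in s, f x ∂μ.toJordanDecomposition.negPart

/-- A Bogovskii path system on `Ω̂ = U`: a measurable family of rectifiable curves
`γ_y` joining each `y ∈ U` to the base point `x0` inside `U`, with Ahlfors-type
length bounds and uniform interiority. -/
structure PathSystem {n : ℕ} (Ω U : Set (En n)) (x0 : En n) : Type where
  γ : En n → ℝ → En n
  contOn : ∀ y ∈ U, ContinuousOn (γ y) (Set.Icc 0 1)
  mapsTo : ∀ y ∈ U, ∀ t ∈ Set.Icc (0:ℝ) 1, γ y t ∈ U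
  start : ∀ y ∈ U, γ y 0 = y
  ends : ∀ y ∈ U, γ y 1 = x0
  rectifiable : ∀ y ∈ U, eVariationOn (γ y) (Set.Icc 0 1) < ⊤
  meas : Measurable fun q : ℝ × En n => γ q.2 q.1
  C : ℝ
  Cpos : 0 < C
  ball_len : ∀ x ∈ Ω, ∀ y ∈ Ω, ∀ r : ℝ, r ≤ Metric.infDist x Uᶜ / 2 →
    eVariationOn (γ y) {t ∈ Set.Icc (0:ℝ) 1 | γ y t ∈ Metric.ball x r} ≤
      ENNReal.ofReal (C * r)
  total_len : ∀ y ∈ U, eVariationOn (γ y) (Set.Icc 0 1) ≤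
      ENNReal.ofReal C * geoDist U x0 y
  unif : ∃ ε0 : ℝ, 0 < ε0 ∧ ∀ ε : ℝ, 0 < ε → ε < ε0 → ∃ δ : ℝ, 0 < δ ∧
      ∀ y ∈ U, ε < Metric.infDist y Uᶜ →
        ∀ t ∈ Set.Icc (0:ℝ) 1, δ < Metric.infDist (γ y t) Uᶜ

/-- The localized Riesz potential `I₁μ0(x) = ∫_Ω |x − y|^{1−n} dμ0(y)` (with value `∞`
allowed). -/
def I1 {n : ℕ} (μ0 : MeasureTheory.Measure (En n)) (Ω : Set (En n)) (x : En n) : ℝ≥0∞ :=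
  ∫⁻ y in Ω, (edist x y) ^ ((1:ℝ) - n) ∂μ0

/-- `ω(x) = μ0({y ∈ Ω : ∃ t ∈ [0,1], |γ_y(t) − x| ≤ d̂(x)/2})`. -/
def omegaFn {n : ℕ} (μ0 : MeasureTheory.Measure (En n)) (Ω U : Set (En n))
    (γ : En n → ℝ → En n) (x : En n) : ℝ≥0∞ :=
  μ0 {y ∈ Ω | ∃ t ∈ Set.Icc (0:ℝ) 1, dist (γ y t) x ≤ Metric.infDist x Uᶜ / 2}

/-- The weight `w0(x) = I₁μ0(x) + ω(x) d̂(x)^{1−n}`. -/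
def wZero {n : ℕ} (μ0 : MeasureTheory.Measure (En n)) (Ω U : Set (En n))
    (γ : En n → ℝ → En n) (x : En n) : ℝ≥0∞ :=
  I1 μ0 Ω x + omegaFn μ0 Ω U γ x * (ENNReal.ofReal (Metric.infDist x Uᶜ)) ^ ((1:ℝ) - n)


/-- Unnormalized ball average. -/
def Sav {n : ℕ} (φ : En n → ℝ) (p : En n) (s : ℝ) : ℝ :=
  ∫ z in ball (0 : En n) 1, φ (p + s • z)

lemma affine_ae {n : ℕ} (p : En n) {s : ℝ} (hs : s ≠ 0) {Q : En n → Prop}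
    (h : ∀ᵐ x ∂(volume : Measure (En n)), Q x) :
    ∀ᵐ z ∂(volume : Measure (En n)), Q (p + s • z) := by
  have h1 : ∀ᵐ z ∂(volume : Measure (En n)), Q (p + z) :=
    (measurePreserving_add_left volume p).quasiMeasurePreserving.ae h
  rw [ae_iff] at h1 ⊢
  have : {z : En n | ¬ Q (p + s • z)} = (fun z => s • z) ⁻¹' {z | ¬ Q (p + z)} := rfl
  rw [this, Measure.addHaar_preimage_smul volume hs, h1, mul_zero]

lemma sav_integrable {n : ℕ} {φ : En n → ℝ} (hφ : Continuous φ) (p : En n) (s : ℝ) :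
    IntegrableOn (fun z : En n => φ (p + s • z)) (ball 0 1) := by
  have : Continuous (fun z : En n => φ (p + s • z)) := by fun_prop
  exact (this.continuousOn.integrableOn_compact (isCompact_closedBall 0 1)).mono_set
    ball_subset_closedBall

lemma sav_hasDeriv {n : ℕ} {φ : En n → ℝ} {K : ℝ≥0} (hφ : LipschitzWith K φ)
    (p q : En n) (s r : ℝ) (τ : ℝ) (hτ : s + τ * r ≠ 0) :
    HasDerivAt (fun τ : ℝ => Sav φ (p + τ • q) (s + τ * r))
      (∫ z in ball (0 : En n) 1, fderiv ℝ φ ((p + τ • q) + (s + τ * r) • z) (q + r • z)) τ := by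
  have hc := hφ.continuous
  refine (hasDerivAt_integral_of_dominated_loc_of_lip (𝕜 := ℝ) (μ := volume.restrict (ball (0 : En n) 1))
    (F := fun τ z => φ ((p + τ • q) + (s + τ * r) • z)) (s := univ)
    (bound := fun _ => (K : ℝ) * (‖q‖ + |r|)) (by simp) ?_ ?_ ?_ ?_ ?_ ?_).2
  · refine Filter.Eventually.of_forall fun t => ?_
    exact Continuous.aestronglyMeasurable (by fun_prop)
  · exact sav_integrable hc _ _
  · apply Measurable.aestronglyMeasurable
    have : Measurable fun z : En n => (fderiv ℝ φ z) := measurable_fderiv ℝ φ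
    have h2 : Measurable fun z : En n => fderiv ℝ φ ((p + τ • q) + (s + τ * r) • z) :=
      this.comp (by fun_prop)
    have h3 : Measurable fun z : En n => q + r • z := by fun_prop
    exact (isBoundedBilinearMap_apply (𝕜 := ℝ) (E := En n) (F := ℝ)).continuous.measurable.comp
      (h2.prodMk h3)
  · refine (ae_restrict_iff' measurableSet_ball).2 (Filter.Eventually.of_forall fun z hz => ?_)
    rw [lipschitzOnWith_univ]
    refine LipschitzWith.of_dist_le_mul fun a b => ?_
    refine (hφ.dist_le_mul _ _).trans ?_
    have hz1 : ‖z‖ ≤ 1 := by simpa using (mem_ball_zero_iff.1 hz).le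
    have e : p + a • q + (s + a * r) • z - (p + b • q + (s + b * r) • z)
        = (a - b) • (q + r • z) := by
      module
    rw [dist_eq_norm, e, norm_smul, Real.dist_eq]
    have h1 : ‖q + r • z‖ ≤ ‖q‖ + |r| := by
      refine (norm_add_le _ _).trans ?_
      rw [norm_smul, Real.norm_eq_abs]
      nlinarith [abs_nonneg r]
    have : (↑(Real.nnabs (↑K * (‖q‖ + |r|))) : ℝ) = ↑K * (‖q‖ + |r|) := by
      rw [Real.coe_nnabs, abs_of_nonneg (by positivity)]
    rw [this, Real.norm_eq_abs]
    have := mul_le_mul_of_nonneg_left h1 (show 0 ≤ (K : ℝ) * |a - b| by positivity)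
    nlinarith
  · exact integrableOn_const (by exact measure_ball_lt_top.ne) (by finiteness)
  · refine ae_restrict_of_ae ?_
    filter_upwards [affine_ae (p + τ • q) hτ (hφ.ae_differentiableAt)] with z hz
    have h1 : HasDerivAt (fun t : ℝ => (p + t • q) + (s + t * r) • z) (q + r • z) τ := by
      have a1 : HasDerivAt (fun t : ℝ => p + t • q) ((1:ℝ) • q) τ :=
        ((hasDerivAt_id τ).smul_const q).const_add p
      have a2 : HasDerivAt (fun t : ℝ => (s + t * r) • z) ((1 * r) • z) τ :=
        (((hasDerivAt_id τ).mul_const r).const_add s).smul_const z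
      have a3 := a1.add a2
      rw [one_smul, one_mul] at a3
      exact a3
    exact hz.hasFDerivAt.comp_hasDerivAt τ h1

lemma fderiv_norm_le' {n : ℕ} {φ : En n → ℝ} {K : ℝ≥0} (hφ : LipschitzWith K φ) (x : En n) :
    ‖fderiv ℝ φ x‖ ≤ K := norm_fderiv_le_of_lipschitz ℝ hφ

lemma fderiv_intOn {n : ℕ} {φ : En n → ℝ} {K : ℝ≥0} (hφ : LipschitzWith K φ) {s : Set (En n)}
    (hs : volume s ≠ ⊤) : IntegrableOn (fun x => ‖fderiv ℝ φ x‖) s := by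
  refine Measure.integrableOn_of_bounded (M := K) hs
    (measurable_fderiv ℝ φ).norm.aestronglyMeasurable ?_
  refine Filter.Eventually.of_forall fun x => ?_
  simpa using fderiv_norm_le' hφ x

lemma sav_step {n : ℕ} {φ : En n → ℝ} {K : ℝ≥0} (hφ : LipschitzWith K φ)
    (p p' : En n) (s s' : ℝ) (hs : 0 < s) (hd : dist p p' + |s' - s| ≤ s / 2) :
    |Sav φ p' s' - Sav φ p s| ≤
      (dist p p' + |s' - s|) * ((2 / s) ^ n * ∫ x in ball p (2 * s), ‖fderiv ℝ φ x‖) := by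
  set q := p' - p with hq
  set r := s' - s with hr
  have hqd : dist p p' = ‖q‖ := by rw [dist_comm, dist_eq_norm]
  rw [hqd] at hd ⊢
  have hst : ∀ t ∈ Icc (0:ℝ) 1, s / 2 ≤ s + t * r := by
    intro t ht
    have : |t * r| ≤ |r| := by
      rw [abs_mul, abs_of_nonneg ht.1]; nlinarith [ht.2, abs_nonneg r]
    nlinarith [neg_abs_le (t * r), norm_nonneg q]
  have hst' : ∀ t ∈ Icc (0:ℝ) 1, ‖t • q‖ + (s + t * r) ≤ 2 * s := by
    intro t ht
    have : |t * r| ≤ |r| := by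
      rw [abs_mul, abs_of_nonneg ht.1]; nlinarith [ht.2, abs_nonneg r]
    have h2 : ‖t • q‖ ≤ ‖q‖ := by
      rw [norm_smul, Real.norm_eq_abs, abs_of_nonneg ht.1]; nlinarith [ht.2, norm_nonneg q]
    nlinarith [le_abs_self (t * r), norm_nonneg q]
  have key := norm_image_sub_le_of_norm_deriv_le_segment_01'
    (f := fun t : ℝ => Sav φ (p + t • q) (s + t * r))
    (f' := fun t => ∫ z in ball (0 : En n) 1, fderiv ℝ φ ((p + t • q) + (s + t * r) • z) (q + r • z))
    (C := (‖q‖ + |r|) * ((2 / s) ^ n * ∫ x in ball p (2 * s), ‖fderiv ℝ φ x‖))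
    (fun t ht => (sav_hasDeriv hφ p q s r t (by have := hst t ht; linarith)).hasDerivWithinAt) ?_
  · simpa [hq, hr] using key
  intro t ht
  have ht' := Ico_subset_Icc_self ht
  have hpos : 0 < s + t * r := by have := hst t ht'; linarith
  set P := p + t • q
  set R := s + t * r
  have e1 : ∫ z in ball (0 : En n) 1, ‖fderiv ℝ φ (P + R • z)‖
      = (R ^ n)⁻¹ * ∫ x in ball P R, ‖fderiv ℝ φ x‖ := by
    have := Measure.setIntegral_comp_smul_of_pos (volume : Measure (En n))
      (fun z => ‖fderiv ℝ φ (P + z)‖) (ball (0 : En n) 1) hpos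
    rw [this, finrank_euclideanSpace_fin, smul_unitBall_of_pos hpos, smul_eq_mul]
    congr 1
    have h2 := (measurePreserving_add_left (volume : Measure (En n)) P).setIntegral_preimage_emb
      (MeasurableEquiv.addLeft P).measurableEmbedding (fun x => ‖fderiv ℝ φ x‖) (ball P R)
    rw [← h2]
    congr 2
    ext z; simp [mem_ball, dist_eq_norm]
  calc ‖∫ z in ball (0 : En n) 1, fderiv ℝ φ (P + R • z) (q + r • z)‖
      ≤ ∫ z in ball (0 : En n) 1, ‖fderiv ℝ φ (P + R • z)‖ * (‖q‖ + |r|) := by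
        refine norm_integral_le_of_norm_le ?_ ?_
        · refine Integrable.mul_const ?_ _
          refine Measure.integrableOn_of_bounded (M := K) measure_ball_lt_top.ne
            ?_ ?_
          · exact ((measurable_fderiv ℝ φ).norm.comp
              (show Measurable fun z : En n => P + R • z by fun_prop)).aestronglyMeasurable
          · refine Filter.Eventually.of_forall fun x => ?_
            simpa using fderiv_norm_le' hφ _
        · refine (ae_restrict_iff' measurableSet_ball).2 (Filter.Eventually.of_forall fun z hz => ?_)
          have hz1 : ‖z‖ ≤ 1 := by simpa using (mem_ball_zero_iff.1 hz).le
          refine (ContinuousLinearMap.le_opNorm _ _).trans ?_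
          gcongr
          refine (norm_add_le _ _).trans ?_
          rw [norm_smul, Real.norm_eq_abs]
          nlinarith [abs_nonneg r]
    _ = (‖q‖ + |r|) * ((R ^ n)⁻¹ * ∫ x in ball P R, ‖fderiv ℝ φ x‖) := by
        rw [integral_mul_const, e1, mul_comm]
    _ ≤ _ := by
        have hsub : ball P R ⊆ ball p (2 * s) := by
          apply ball_subset_ball'
          have : dist P p = ‖t • q‖ := by simp [P, dist_eq_norm]
          rw [this]; have := hst' t ht'; linarith
        gcongr
        · have : (2 / s) ^ n = ((s / 2) ^ n)⁻¹ := by rw [← inv_pow, inv_div]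
          rw [this]
          have := hst t ht'
          gcongr
        · exact Filter.Eventually.of_forall fun x => norm_nonneg _
        · exact fderiv_intOn hφ measure_ball_lt_top.ne

open Classical in
lemma sum_var {X : Type*} [PseudoEMetricSpace X] (γ : ℝ → X) (S : Set ℝ) (t : ℕ → ℝ)
    (ht : Monotone t) (sel : ℕ → Prop) (N : ℕ)
    (h : ∀ i < N, sel i → t i ∈ S ∧ t (i + 1) ∈ S) :
    (∑ i ∈ Finset.range N, if sel i then edist (γ (t i)) (γ (t (i + 1))) else 0)
      ≤ eVariationOn γ (S ∩ Iic (t N)) := by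
  induction N with
  | zero => simp
  | succ N ih =>
    rw [Finset.sum_range_succ]
    have h1 := ih (fun i hi => h i (by omega))
    have h2 : (if sel N then edist (γ (t N)) (γ (t (N + 1))) else 0)
        ≤ eVariationOn γ (S ∩ Icc (t N) (t (N + 1))) := by
      split_ifs with hs
      · obtain ⟨a, b⟩ := h N (by omega) hs
        exact eVariationOn.edist_le γ ⟨a, left_mem_Icc.2 (ht (Nat.le_succ N))⟩
          ⟨b, right_mem_Icc.2 (ht (Nat.le_succ N))⟩
      · simp
    refine (add_le_add h1 h2).trans ?_
    refine (eVariationOn.add_le_union γ ?_).trans (eVariationOn.mono γ ?_)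
    · rintro x ⟨_, hx⟩ y ⟨_, hy⟩
      exact le_trans hx hy.1
    · rintro x (⟨a, b⟩ | ⟨a, b⟩)
      · exact ⟨a, le_trans b (ht (Nat.le_succ N))⟩
      · exact ⟨a, b.2⟩

/-- Fine uniform partition. -/
lemma exists_partition {n : ℕ} (γ : ℝ → En n) (hγ : ContinuousOn γ (Icc 0 1)) (η : ℝ)
    (hη : 0 < η) : ∃ N : ℕ, 0 < N ∧
      ∀ a ∈ Icc (0:ℝ) 1, ∀ b ∈ Icc (0:ℝ) 1, |a - b| ≤ 1 / N → dist (γ a) (γ b) < η := by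
  have hu := isCompact_Icc.uniformContinuousOn_of_continuous hγ
  rw [Metric.uniformContinuousOn_iff] at hu
  obtain ⟨δ, hδ, h⟩ := hu η hη
  obtain ⟨N, hN⟩ := exists_nat_one_div_lt hδ
  refine ⟨N + 1, by omega, fun a ha b hb hab => h a ha b hb ?_⟩
  rw [Real.dist_eq]
  push_cast at hab
  exact lt_of_le_of_lt hab hN

lemma core {n : ℕ} {φ : En n → ℝ} {K : ℝ≥0} (hφ : LipschitzWith K φ)
    (γ : ℝ → En n) (hγ : ContinuousOn γ (Icc 0 1)) (f : En n → ℝ) (hf : LipschitzWith 1 f)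
    (m : ℝ) (hm : 0 < m) (hfm : ∀ t ∈ Icc (0:ℝ) 1, m ≤ f (γ t)) :
    ENNReal.ofReal |Sav φ (γ 1) (f (γ 1) / 16) - Sav φ (γ 0) (f (γ 0) / 16)| ≤
      ENNReal.ofReal (2 * 36 ^ n) * ∫⁻ x, ‖fderiv ℝ φ x‖ₑ * ((ENNReal.ofReal (f x))⁻¹ ^ n *
        eVariationOn γ {t ∈ Icc (0:ℝ) 1 | γ t ∈ ball x (f x / 4)}) := by
  classical
  obtain ⟨N, hN, hpart⟩ := exists_partition γ hγ (m / 64) (by positivity)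
  have hNr : (0:ℝ) < N := by exact_mod_cast hN
  set t : ℕ → ℝ := fun i => i / N with ht
  have tmono : Monotone t := fun i j hij => by
    simp only [ht]; gcongr
  have tmem : ∀ i ≤ N, t i ∈ Icc (0:ℝ) 1 := fun i hi =>
    ⟨by positivity, by rw [ht]; simp only; rw [div_le_one hNr]; exact_mod_cast hi⟩
  have hfl : ∀ a b, |f a - f b| ≤ dist a b := fun a b => by
    have := hf.dist_le_mul a b; simpa [Real.dist_eq] using this
  have hstep : ∀ i < N, dist (γ (t i)) (γ (t (i + 1))) < m / 64 := fun i hi =>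
    hpart _ (tmem i hi.le) _ (tmem (i + 1) hi) (by
      have : t i - t (i + 1) = - (1 / N) := by simp only [ht]; push_cast; field_simp; ring
      rw [this, abs_neg, abs_of_pos (by positivity)])
  set G : ℕ → ℝ := fun i => Sav φ (γ (t i)) (f (γ (t i)) / 16) with hG
  have hmeas : Measurable fun x : En n => ‖fderiv ℝ φ x‖ₑ := (measurable_fderiv ℝ φ).enorm
  have hGi : ∀ i < N, ENNReal.ofReal |G (i + 1) - G i| ≤
      ∫⁻ x, ‖fderiv ℝ φ x‖ₑ * (ball (γ (t i)) (f (γ (t i)) / 8)).indicator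
        (fun _ => ENNReal.ofReal (2 * (32 / f (γ (t i))) ^ n) *
          edist (γ (t i)) (γ (t (i + 1)))) x := by
    intro i hi
    have hfi := hfm _ (tmem i hi.le)
    have hd := hstep i hi
    set p := γ (t i)
    set p' := γ (t (i + 1))
    have hfpos : 0 < f p := by linarith
    have hss : |f p' / 16 - f p / 16| ≤ dist p p' / 16 := by
      rw [← sub_div, abs_div, abs_of_pos (by norm_num : (0:ℝ) < 16)]
      have := hfl p' p; rw [dist_comm] at this; gcongr
    have h0 := dist_nonneg (x := p) (y := p')
    have := sav_step hφ p p' (f p / 16) (f p' / 16) (by positivity) (by linarith)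
    have e1 : 2 / (f p / 16) = 32 / f p := by field_simp; norm_num
    have e2 : 2 * (f p / 16) = f p / 8 := by ring
    rw [e1, e2] at this
    have hint0 : 0 ≤ ∫ x in ball p (f p / 8), ‖fderiv ℝ φ x‖ := integral_nonneg fun _ => norm_nonneg _
    have h3 : |G (i + 1) - G i| ≤ (2 * (32 / f p) ^ n) * dist p p' *
        ∫ x in ball p (f p / 8), ‖fderiv ℝ φ x‖ := by
      refine this.trans ?_
      rw [← mul_assoc]
      refine mul_le_mul_of_nonneg_right ?_ hint0
      have h5 : dist p p' + |f p' / 16 - f p / 16| ≤ 2 * dist p p' := by linarith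
      have := mul_le_mul_of_nonneg_right h5 (show 0 ≤ (32 / f p) ^ n by positivity)
      linarith
    refine (ENNReal.ofReal_le_ofReal h3).trans ?_
    rw [ENNReal.ofReal_mul (by positivity), ENNReal.ofReal_mul (by positivity), ← edist_dist,
      ofReal_integral_eq_lintegral_ofReal (fderiv_intOn hφ measure_ball_lt_top.ne)
        (Filter.Eventually.of_forall fun _ => norm_nonneg _)]
    have e3 : ∀ x, ‖fderiv ℝ φ x‖ₑ * (ball p (f p / 8)).indicator
        (fun _ => ENNReal.ofReal (2 * (32 / f p) ^ n) * edist p p') x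
        = (ENNReal.ofReal (2 * (32 / f p) ^ n) * edist p p') *
          (ball p (f p / 8)).indicator (fun x => ‖fderiv ℝ φ x‖ₑ) x := by
      intro x
      by_cases hx : x ∈ ball p (f p / 8)
      · simp only [indicator_of_mem hx]; ring
      · simp [indicator_of_notMem hx]
    simp_rw [e3]
    rw [lintegral_const_mul _ (hmeas.indicator measurableSet_ball),
      lintegral_indicator measurableSet_ball]
    simp_rw [ofReal_norm]
    exact le_rfl
  have hsum : |Sav φ (γ 1) (f (γ 1) / 16) - Sav φ (γ 0) (f (γ 0) / 16)|
      ≤ ∑ i ∈ Finset.range N, |G (i + 1) - G i| := by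
    have h1 : t N = 1 := by simp only [ht]; field_simp
    have h0 : t 0 = 0 := by simp [ht]
    have e : Sav φ (γ 1) (f (γ 1) / 16) - Sav φ (γ 0) (f (γ 0) / 16)
        = ∑ i ∈ Finset.range N, (G (i + 1) - G i) := by
      rw [Finset.sum_range_sub]; simp only [hG, h1, h0]
    rw [e]
    exact Finset.abs_sum_le_sum_abs _ _
  refine (ENNReal.ofReal_le_ofReal hsum).trans ?_
  rw [ENNReal.ofReal_sum_of_nonneg (fun _ _ => abs_nonneg _)]
  refine (Finset.sum_le_sum fun i hi => hGi i (Finset.mem_range.1 hi)).trans ?_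
  rw [← lintegral_finsetSum]
  swap
  · intro i _
    exact hmeas.mul (measurable_const.indicator measurableSet_ball)
  rw [← lintegral_const_mul' _ _ ENNReal.ofReal_ne_top]
  refine lintegral_mono fun x => ?_
  simp only
  rw [← Finset.mul_sum, mul_left_comm]
  gcongr
  have hv := sum_var γ {t ∈ Icc (0:ℝ) 1 | γ t ∈ ball x (f x / 4)} t tmono
    (fun i => x ∈ ball (γ (t i)) (f (γ (t i)) / 8)) N ?_
  · refine le_trans ?_ (mul_le_mul_right (mul_le_mul_right (hv.trans (eVariationOn.mono γ inter_subset_left)) _) _)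
    rw [Finset.mul_sum, Finset.mul_sum]
    refine Finset.sum_le_sum fun i hi => ?_
    by_cases hx : x ∈ ball (γ (t i)) (f (γ (t i)) / 8)
    · simp only [indicator_of_mem hx, if_pos hx]
      rw [← mul_assoc]
      gcongr
      have hfi := hfm _ (tmem i (Finset.mem_range.1 hi).le)
      have hx' := mem_ball.1 hx
      have h2 := abs_le.1 ((hfl x (γ (t i))))
      have hfx : 0 < f x := by linarith
      have hfp : 0 < f (γ (t i)) := by linarith
      rw [← ENNReal.ofReal_inv_of_pos hfx, ← ENNReal.ofReal_pow (by positivity),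
        ← ENNReal.ofReal_mul (by positivity)]
      apply ENNReal.ofReal_le_ofReal
      rw [mul_assoc, ← mul_pow]
      gcongr
      rw [div_le_iff₀ hfp, mul_assoc, ← div_eq_inv_mul]
      have : 8 / 9 ≤ f (γ (t i)) / f x := by
        rw [le_div_iff₀ hfx]; linarith
      linarith
    · simp [indicator_of_notMem hx]
  · intro i hi hx
    have hfi := hfm _ (tmem i hi.le)
    have hx' := mem_ball.1 hx
    have h2 := abs_le.1 ((hfl x (γ (t i))))
    have hd := hstep i hi
    refine ⟨⟨tmem i hi.le, ?_⟩, ⟨tmem (i + 1) hi, ?_⟩⟩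
    · rw [mem_ball']; linarith
    · rw [mem_ball']
      have := dist_triangle x (γ (t i)) (γ (t (i + 1)))
      linarith

lemma rpow_anti {a b : ℝ≥0∞} {z : ℝ} (hz : z ≤ 0) (h : a ≤ b) : b ^ z ≤ a ^ z := by
  have h1 : a ^ (-z) ≤ b ^ (-z) := ENNReal.rpow_le_rpow h (by linarith)
  rw [ENNReal.rpow_neg, ENNReal.rpow_neg] at h1
  exact ENNReal.inv_le_inv.1 h1

lemma inv_pow_mul {n : ℕ} {a : ℝ} (ha : 0 < a) :
    (ENNReal.ofReal a)⁻¹ ^ n * ENNReal.ofReal a = ENNReal.ofReal a ^ ((1:ℝ) - n) := by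
  rw [ENNReal.rpow_sub _ _ (by simpa using ha) ENNReal.ofReal_ne_top, ENNReal.rpow_one,
    ENNReal.rpow_natCast, div_eq_mul_inv, ENNReal.inv_pow, mul_comm]

lemma coreΩ {n : ℕ} {φ : En n → ℝ} {K : ℝ≥0} (hφ : LipschitzWith K φ) {Ω U : Set (En n)}
    (hΩ : MeasurableSet Ω) (hnull : volume (U \ Ω) = 0)
    (γ : ℝ → En n) (hγ : ContinuousOn γ (Icc 0 1)) (f : En n → ℝ) (hf : LipschitzWith 1 f)
    (m : ℝ) (hm : 0 < m) (hfm : ∀ t ∈ Icc (0:ℝ) 1, m ≤ f (γ t))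
    (hfd : ∀ x, f x ≤ infDist x Uᶜ) (C0 : ℝ) (hC0 : 0 ≤ C0)
    (hball : ∀ x ∈ Ω, ∀ r : ℝ, r ≤ infDist x Uᶜ / 2 →
      eVariationOn γ {t ∈ Icc (0:ℝ) 1 | γ t ∈ ball x r} ≤ ENNReal.ofReal (C0 * r))
    (k : En n → ℝ≥0∞)
    (hk : ∀ x ∈ Ω, 0 < f x → (∃ t ∈ Icc (0:ℝ) 1, dist (γ t) x < f x / 4) →
      ENNReal.ofReal (f x) ^ ((1:ℝ) - n) ≤ k x) :
    ENNReal.ofReal |Sav φ (γ 1) (f (γ 1) / 16) - Sav φ (γ 0) (f (γ 0) / 16)| ≤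
      ENNReal.ofReal (2 * 36 ^ n * C0) * ∫⁻ x in Ω, ‖fderiv ℝ φ x‖ₑ * k x := by
  refine (core hφ γ hγ f hf m hm hfm).trans ?_
  rw [ENNReal.ofReal_mul (p := 2 * 36 ^ n) (by positivity), mul_assoc]
  gcongr ENNReal.ofReal (2 * 36 ^ n) * ?_
  rw [← lintegral_const_mul' _ _ ENNReal.ofReal_ne_top, ← lintegral_indicator hΩ]
  refine lintegral_mono_ae ?_
  have hae : ∀ᵐ x ∂(volume : Measure (En n)), x ∉ U \ Ω :=
    measure_eq_zero_iff_ae_notMem.1 hnull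
  filter_upwards [hae] with x hx
  by_cases hne : ∃ t ∈ Icc (0:ℝ) 1, dist (γ t) x < f x / 4
  · have hfx : 0 < f x := by
      obtain ⟨t, _, h⟩ := hne
      have := dist_nonneg (x := γ t) (y := x); linarith
    have hxU : x ∈ U := by
      by_contra h
      have h1 := hfd x
      rw [infDist_zero_of_mem (show x ∈ Uᶜ from h)] at h1
      linarith
    have hxΩ : x ∈ Ω := by
      by_contra h; exact hx ⟨hxU, h⟩
    rw [indicator_of_mem hxΩ, mul_left_comm (ENNReal.ofReal C0)]
    refine mul_le_mul_right ?_ _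
    have h1 := hball x hxΩ (f x / 4) (by have := hfd x; linarith)
    calc (ENNReal.ofReal (f x))⁻¹ ^ n * eVariationOn γ {t ∈ Icc (0:ℝ) 1 | γ t ∈ ball x (f x / 4)}
        ≤ (ENNReal.ofReal (f x))⁻¹ ^ n * (ENNReal.ofReal C0 * ENNReal.ofReal (f x)) := by
          gcongr
          refine h1.trans ?_
          rw [← ENNReal.ofReal_mul hC0]
          apply ENNReal.ofReal_le_ofReal
          nlinarith
      _ = ENNReal.ofReal C0 * (ENNReal.ofReal (f x) ^ ((1:ℝ) - n)) := by
          rw [mul_left_comm, inv_pow_mul hfx]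
      _ ≤ _ := by
          gcongr
          exact hk x hxΩ hfx hne
  · have : {t ∈ Icc (0:ℝ) 1 | γ t ∈ ball x (f x / 4)} = ∅ := by
      ext t
      simp only [mem_ofPred_eq, mem_empty_iff_false, iff_false, mem_ball]
      rintro ⟨h1, h2⟩
      exact hne ⟨t, h1, h2⟩
    rw [this]; simp

lemma lip_infDist {n : ℕ} (S : Set (En n)) : LipschitzWith 1 fun x => infDist x S :=
  lipschitz_infDist_pt S

/-- Pointwise inequality along a curve from `y` to `q`. -/
lemma pw {n : ℕ} (hn : 1 ≤ n) {φ : En n → ℝ} {K : ℝ≥0} (hφ : LipschitzWith K φ) {Ω U : Set (En n)}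
    (hΩ : MeasurableSet Ω) (hnull : volume (U \ Ω) = 0) (hU : IsOpen U) (hUne : Uᶜ.Nonempty)
    (γ : ℝ → En n) (hγ : ContinuousOn γ (Icc 0 1)) (hγU : ∀ t ∈ Icc (0:ℝ) 1, γ t ∈ U)
    (C0 : ℝ) (hC0 : 0 ≤ C0)
    (hball : ∀ x ∈ Ω, ∀ r : ℝ, r ≤ infDist x Uᶜ / 2 →
      eVariationOn γ {t ∈ Icc (0:ℝ) 1 | γ t ∈ ball x r} ≤ ENNReal.ofReal (C0 * r))
    (h1y : 1 ≤ dist (γ 1) (γ 0)) (h1d : 1 ≤ infDist (γ 1) Uᶜ)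
    (k : En n → ℝ≥0∞)
    (hk0 : ∀ x ∈ Ω, edist x (γ 0) ^ ((1:ℝ) - n) ≤ k x) (hk1 : ∀ x ∈ Ω, 1 ≤ k x)
    (hk : ∀ x ∈ Ω, (∃ t ∈ Icc (0:ℝ) 1, dist (γ t) x < infDist x Uᶜ / 2) →
      ENNReal.ofReal (infDist x Uᶜ) ^ ((1:ℝ) - n) ≤ k x) :
    ENNReal.ofReal |Sav φ (γ 1) (1 / 16) - volume.real (ball (0 : En n) 1) * φ (γ 0)| ≤
      ENNReal.ofReal (2 * 36 ^ n * C0) * ∫⁻ x in Ω, ‖fderiv ℝ φ x‖ₑ * k x := by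
  have hz : (1:ℝ) - n ≤ 0 := by
    have : (1:ℝ) ≤ n := by exact_mod_cast hn
    linarith
  have hdpos : ∀ x ∈ U, 0 < infDist x Uᶜ := fun x hx =>
    (hU.isClosed_compl.notMem_iff_infDist_pos hUne).1 (by simpa using hx)
  obtain ⟨d0, hd0, hd0'⟩ : ∃ d0 > 0, ∀ t ∈ Icc (0:ℝ) 1, d0 ≤ infDist (γ t) Uᶜ := by
    obtain ⟨t0, ht0, hmin⟩ := (isCompact_Icc (a := (0:ℝ)) (b := 1)).exists_isMinOn
      (by simp) ((continuous_infDist_pt (Uᶜ)).comp_continuousOn hγ)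
    exact ⟨infDist (γ t0) Uᶜ, hdpos _ (hγU t0 ht0), fun t ht => hmin ht⟩
  set y := γ 0 with hy
  set W := volume.real (ball (0 : En n) 1) with hW
  have hW0 : 0 ≤ W := measureReal_nonneg
  have main : ∀ ε : ℝ, 0 < ε →
      ENNReal.ofReal |Sav φ (γ 1) (1 / 16) - W * φ y| ≤
        ENNReal.ofReal (2 * 36 ^ n * C0) * (∫⁻ x in Ω, ‖fderiv ℝ φ x‖ₑ * k x)
          + ENNReal.ofReal (W * K * ε) := by
    intro ε hε
    set f : En n → ℝ := fun x => min (min (max (dist x y) ε) (infDist x Uᶜ)) 1 with hfdef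
    have hflip : LipschitzWith 1 f := by
      have h1 : LipschitzWith 1 fun x : En n => max (dist x y) ε :=
        (LipschitzWith.dist_left y).max_const ε
      have h2 := h1.min (lip_infDist (Uᶜ))
      simpa using h2.min_const 1
    have hc := coreΩ hφ hΩ hnull γ hγ f hflip (min (min ε d0) 1) (by positivity)
      (fun t ht => by
        simp only [hfdef]
        have := hd0' t ht
        gcongr
        exact le_max_right _ _)
      (fun x => (min_le_left _ _).trans (min_le_right _ _)) C0 hC0 hball k ?_
    · have hf1 : f (γ 1) = 1 := by
        simp only [hfdef]
        rw [min_eq_right]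
        exact le_min (h1y.trans (le_max_left _ _)) h1d
      have hf0 : f y ≤ ε := by
        simp only [hfdef]
        refine (min_le_left _ _).trans ((min_le_left _ _).trans ?_)
        simp [hε.le]
      have hf0' : 0 ≤ f y := by
        simp only [hfdef]
        have := infDist_nonneg (x := y) (s := Uᶜ)
        have := le_max_right (dist y y) ε
        positivity
      rw [hf1] at hc
      have hS : |Sav φ y (f y / 16) - W * φ y| ≤ W * K * ε := by
        have e : W * φ y = ∫ z in ball (0 : En n) 1, φ y := by
          rw [setIntegral_const, smul_eq_mul]
        rw [e, Sav, ← integral_sub (sav_integrable hφ.continuous _ _)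
          (integrableOn_const measure_ball_lt_top.ne), ← Real.norm_eq_abs]
        refine (norm_setIntegral_le_of_norm_le_const (C := K * ε) measure_ball_lt_top
          fun z hz => ?_).trans (by rw [← hW]; linarith)
        have hz1 : ‖z‖ ≤ 1 := by simpa using (mem_ball_zero_iff.1 hz).le
        rw [← Real.dist_eq] at *
        refine (hφ.dist_le_mul _ _).trans ?_
        gcongr
        rw [dist_eq_norm, add_sub_cancel_left, norm_smul, Real.norm_eq_abs,
          abs_of_nonneg (by positivity)]
        nlinarith [norm_nonneg z]
      have htri : |Sav φ (γ 1) (1 / 16) - W * φ y| ≤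
          |Sav φ (γ 1) (1 / 16) - Sav φ y (f y / 16)| + W * K * ε := by
        refine (abs_sub_le _ (Sav φ y (f y / 16)) _).trans ?_
        linarith
      refine (ENNReal.ofReal_le_ofReal htri).trans ?_
      rw [ENNReal.ofReal_add (abs_nonneg _) (by positivity)]
      gcongr
    · intro x hx hfx hne
      have hfle : f x ≤ infDist x Uᶜ := (min_le_left _ _).trans (min_le_right _ _)
      have hcase : f x = max (dist x y) ε ∨ f x = infDist x Uᶜ ∨ f x = 1 := by
        simp only [hfdef]
        rcases min_choice (min (max (dist x y) ε) (infDist x Uᶜ)) 1 with h | h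
        · rw [h]
          rcases min_choice (max (dist x y) ε) (infDist x Uᶜ) with h' | h' <;> rw [h'] <;> simp
        · rw [h]; simp
      rcases hcase with h | h | h
      · refine le_trans ?_ (hk0 x hx)
        apply rpow_anti hz
        rw [edist_dist, h]
        exact ENNReal.ofReal_le_ofReal (le_max_left _ _)
      · rw [h]
        obtain ⟨t, ht, htd⟩ := hne
        exact hk x hx ⟨t, ht, by linarith⟩
      · rw [h]; simpa using hk1 x hx
  refine ENNReal.le_of_forall_pos_le_add fun δ hδ _ => ?_
  have hδ' : (0:ℝ) < δ := by exact_mod_cast hδ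
  refine (main (δ / (W * K + 1)) (by positivity)).trans ?_
  gcongr
  rw [← ENNReal.ofReal_coe_nnreal]
  apply ENNReal.ofReal_le_ofReal
  rw [← mul_div_assoc, div_le_iff₀ (by positivity)]
  nlinarith

lemma seg_var {n : ℕ} (a v x : En n) (r : ℝ) :
    eVariationOn (fun t : ℝ => a + t • v) {t ∈ Icc (0:ℝ) 1 | a + t • v ∈ ball x r}
      ≤ ENNReal.ofReal (2 * r) := by
  refine iSup_le ?_
  rintro ⟨N, u, hu, hm⟩
  simp only
  have h : ∑ i ∈ Finset.range N, edist (a + u (i + 1) • v) (a + u i • v)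
      = ENNReal.ofReal (∑ i ∈ Finset.range N, (u (i + 1) * ‖v‖ - u i * ‖v‖)) := by
    rw [ENNReal.ofReal_sum_of_nonneg]
    · refine Finset.sum_congr rfl fun i _ => ?_
      rw [edist_dist, dist_eq_norm]
      congr 1
      rw [add_sub_add_left_eq_sub, ← sub_smul, norm_smul, Real.norm_eq_abs, abs_of_nonneg
        (sub_nonneg.2 (hu (Nat.le_succ i)))]
      ring
    · intro i _
      have := hu (Nat.le_succ i)
      have := mul_le_mul_of_nonneg_right this (norm_nonneg v)
      exact sub_nonneg.2 this
  rw [h, Finset.sum_range_sub (fun i => u i * ‖v‖)]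
  apply ENNReal.ofReal_le_ofReal
  have h1 := mem_ball.1 (hm 0).2
  have h2 := mem_ball.1 (hm N).2
  have h3 := dist_triangle_right (a + u N • v) (a + u 0 • v) x
  have h4 : dist (a + u N • v) (a + u 0 • v) = u N * ‖v‖ - u 0 * ‖v‖ := by
    rw [dist_eq_norm, add_sub_add_left_eq_sub, ← sub_smul, norm_smul, Real.norm_eq_abs,
      abs_of_nonneg (sub_nonneg.2 (hu (Nat.zero_le N)))]
    ring
  linarith

open Classical in
/-- The kernel. -/
def kern {n : ℕ} (U : Set (En n)) (γ : En n → ℝ → En n) (x y : En n) : ℝ≥0∞ :=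
  edist x y ^ ((1:ℝ) - n) +
    if ∃ q : ℚ, (q : ℝ) ∈ Icc (0:ℝ) 1 ∧ dist (γ y q) x < infDist x Uᶜ / 2 then
      ENNReal.ofReal (infDist x Uᶜ) ^ ((1:ℝ) - n) else 0

lemma exists_rat_of_lt {g : ℝ → ℝ} (hg : ContinuousOn g (Icc 0 1)) {t r : ℝ}
    (ht : t ∈ Icc (0:ℝ) 1) (h : g t < r) : ∃ q : ℚ, (q : ℝ) ∈ Icc (0:ℝ) 1 ∧ g q < r := by
  obtain ⟨u, hu, hug⟩ := (_root_.continuousOn_iff'.1 hg) (Iio r) isOpen_Iio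
  have htu : t ∈ u := by
    have : t ∈ g ⁻¹' Iio r ∩ Icc 0 1 := ⟨h, ht⟩
    rw [hug] at this; exact this.1
  have hcl : t ∈ closure (Ioo (0:ℝ) 1) := by rw [closure_Ioo (by norm_num)]; exact ht
  have hne : (u ∩ Ioo (0:ℝ) 1).Nonempty := mem_closure_iff.1 hcl u hu htu
  obtain ⟨q, hq⟩ := (Rat.denseRange_cast (𝕜 := ℝ)).exists_mem_open (hu.inter isOpen_Ioo) hne
  refine ⟨q, Ioo_subset_Icc_self hq.2, ?_⟩
  have : (q : ℝ) ∈ u ∩ Icc 0 1 := ⟨hq.1, Ioo_subset_Icc_self hq.2⟩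
  rw [← hug] at this
  exact this.1

lemma seg_close {n : ℕ} {a b c : En n} {R : ℝ} (ha : dist a c ≤ R) (hb : dist b c ≤ R)
    {t : ℝ} (ht : t ∈ Icc (0:ℝ) 1) : dist (a + t • (b - a)) c ≤ R := by
  have := (convex_closedBall c R).add_smul_sub_mem (mem_closedBall.2 ha) (mem_closedBall.2 hb) ht
  exact mem_closedBall.1 this

lemma infDist_ge {n : ℕ} (S : Set (En n)) (a b : En n) : infDist a S - dist b a ≤ infDist b S := by
  have := infDist_le_infDist_add_dist (s := S) (x := a) (y := b)
  rw [dist_comm] at this; linarith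

lemma pw_all {n : ℕ} (hn : 1 ≤ n) {Ω U : Set (En n)}
    (hΩ : MeasurableSet Ω) (hnull : volume (U \ Ω) = 0) (hU : IsOpen U) (hUne : Uᶜ.Nonempty)
    (hΩU : Ω ⊆ U) (D : ℝ) (hD : 1 ≤ D) (hdiam : ∀ x ∈ Ω, ∀ y ∈ Ω, dist x y ≤ D)
    (x0 : En n) (h15 : 15 ≤ infDist x0 Uᶜ) (P : PathSystem Ω U x0) :
    ∃ M : ℝ, 0 < M ∧ ∀ (φ : En n → ℝ) (K : ℝ≥0), LipschitzWith K φ → ∃ a : ℝ, ∀ y ∈ Ω,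
      ENNReal.ofReal |φ y - a| ≤ ENNReal.ofReal M *
        ∫⁻ x in Ω, ‖fderiv ℝ φ x‖ₑ * kern U P.γ x y := by
  set W := volume.real (ball (0 : En n) 1) with hW
  have hWpos : 0 < W := by
    rw [hW, measureReal_def]
    exact ENNReal.toReal_pos (measure_ball_pos _ _ one_pos).ne' measure_ball_lt_top.ne
  have hz : (1:ℝ) - n ≤ 0 := by
    have : (1:ℝ) ≤ n := by exact_mod_cast hn
    linarith
  have hD0 : 0 < D := by linarith
  set L : ℝ := D ^ ((n:ℝ) - 1) with hL
  have hL1 : 1 ≤ L := Real.one_le_rpow hD (by linarith)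
  have hCp := P.Cpos
  set M0 : ℝ := 2 * 36 ^ n * (P.C + 2 + 2) with hM0
  have hM0pos : 0 < M0 := by positivity
  refine ⟨M0 * L / W, by positivity, fun φ K hφ => ⟨Sav φ x0 (1 / 16) / W, fun y hy => ?_⟩⟩
  set k : En n → ℝ≥0∞ := fun x => ENNReal.ofReal L * kern U P.γ x y with hk
  have hLe : (1:ℝ≥0∞) ≤ ENNReal.ofReal L := by simpa using hL1
  have hk0 : ∀ x ∈ Ω, edist x y ^ ((1:ℝ) - n) ≤ k x := fun x _ => by
    simp only [hk, kern]
    calc edist x y ^ ((1:ℝ) - n) = 1 * edist x y ^ ((1:ℝ) - n) := (one_mul _).symm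
      _ ≤ _ := mul_le_mul' hLe le_self_add
  have hk1 : ∀ x ∈ Ω, 1 ≤ k x := fun x hx => by
    have h1 : ENNReal.ofReal D ^ ((1:ℝ) - n) ≤ edist x y ^ ((1:ℝ) - n) := by
      apply rpow_anti hz
      rw [edist_dist]; exact ENNReal.ofReal_le_ofReal (hdiam x hx y hy)
    have h2 : (1:ℝ≥0∞) = ENNReal.ofReal L * ENNReal.ofReal D ^ ((1:ℝ) - n) := by
      rw [ENNReal.ofReal_rpow_of_pos hD0, ← ENNReal.ofReal_mul (by positivity), hL,
        ← Real.rpow_add hD0]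
      simp
    rw [h2]
    simp only [hk, kern]
    exact mul_le_mul' le_rfl (h1.trans le_self_add)
  have hrp1 : ∀ d : ℝ, 1 ≤ d → ENNReal.ofReal d ^ ((1:ℝ) - n) ≤ 1 := fun d hd => by
    have := rpow_anti hz (show (1:ℝ≥0∞) ≤ ENNReal.ofReal d by simpa using hd)
    simpa using this
  set I := ∫⁻ x in Ω, ‖fderiv ℝ φ x‖ₑ * k x with hI
  have claim : ENNReal.ofReal |Sav φ x0 (1 / 16) - W * φ y| ≤ ENNReal.ofReal M0 * I := by
    by_cases hfar : 1 ≤ dist x0 y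
    · have h := pw hn hφ hΩ hnull hU hUne (P.γ y) (P.contOn y (hΩU hy)) (P.mapsTo y (hΩU hy))
        P.C hCp.le (fun x hx r hr => P.ball_len x hx y hy r hr)
        (by rw [P.start y (hΩU hy), P.ends y (hΩU hy)]; exact hfar)
        (by rw [P.ends y (hΩU hy)]; linarith) k
        (by rw [P.start y (hΩU hy)]; exact hk0) hk1 ?_
      · rw [P.start y (hΩU hy), P.ends y (hΩU hy)] at h
        refine h.trans ?_
        gcongr
        rw [hM0]
        have : (0:ℝ) ≤ 36 ^ n := by positivity
        linarith
      · rintro x hx ⟨t, ht, htd⟩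
        have hm := exists_rat_of_lt (g := fun t => dist (P.γ y t) x)
          ((continuous_id.dist continuous_const).comp_continuousOn (P.contOn y (hΩU hy))) ht htd
        simp only [hk, kern, if_pos hm]
        calc _ = 1 * ENNReal.ofReal (infDist x Uᶜ) ^ ((1:ℝ) - n) := (one_mul _).symm
          _ ≤ _ := mul_le_mul' hLe le_add_self
    · push Not at hfar
      set q : En n := x0 + (3:ℝ) • EuclideanSpace.single (⟨0, by omega⟩ : Fin n) (1:ℝ) with hq
      have hqx : dist q x0 = 3 := by
        rw [hq, dist_eq_norm, add_sub_cancel_left, norm_smul]; simp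
      have hqy : 1 ≤ dist q y := by
        have := dist_triangle q y x0
        rw [dist_comm y x0] at this; linarith
      have inU : ∀ p, dist p x0 ≤ 3 → 12 ≤ infDist p Uᶜ := fun p hp => by
        have := infDist_ge Uᶜ x0 p; linarith
      have inU' : ∀ p, dist p x0 ≤ 3 → p ∈ U := fun p hp => by
        by_contra h
        have := inU p hp
        rw [infDist_zero_of_mem (show p ∈ Uᶜ from h)] at this
        linarith
      have hseg1 : ∀ t ∈ Icc (0:ℝ) 1, dist (y + t • (q - y)) x0 ≤ 3 := fun t ht =>
        seg_close (by rw [dist_comm]; linarith) hqx.le ht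
      have hseg2 : ∀ t ∈ Icc (0:ℝ) 1, dist (q + t • (x0 - q)) x0 ≤ 3 := fun t ht =>
        seg_close hqx.le (by simp) ht
      have e0 : y + (0:ℝ) • (q - y) = y := by simp
      have e1 : y + (1:ℝ) • (q - y) = q := by simp
      have e2 : q + (0:ℝ) • (x0 - q) = q := by simp
      have e3 : q + (1:ℝ) • (x0 - q) = x0 := by simp
      have h1 := pw hn hφ hΩ hnull hU hUne (fun t : ℝ => y + t • (q - y)) (by fun_prop)
        (fun t ht => inU' _ (hseg1 t ht)) 2 (by norm_num) (fun x _ r _ => seg_var y (q - y) x r)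
        (by simp only [e0, e1]; exact hqy)
        (by simp only [e1]; have := inU q hqx.le; linarith) k
        (by simp only [e0]; exact hk0) hk1 ?_
      · have h2 := coreΩ hφ hΩ hnull (fun t : ℝ => q + t • (x0 - q)) (by fun_prop)
          (fun x => min (infDist x Uᶜ) 1) ((lip_infDist Uᶜ).min_const 1) 1 one_pos
          (fun t ht => le_min (by have := inU _ (hseg2 t ht); linarith) le_rfl)
          (fun x => min_le_left _ _) 2 (by norm_num) (fun x _ r _ => seg_var q (x0 - q) x r) k ?_
        · simp only [e0, e1, e2, e3] at h1 h2
          rw [min_eq_right (by linarith), min_eq_right (by have := inU q hqx.le; linarith)] at h2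
          have htri := abs_sub_le (Sav φ x0 (1 / 16)) (Sav φ q (1 / 16)) (W * φ y)
          refine (ENNReal.ofReal_le_ofReal htri).trans ?_
          rw [ENNReal.ofReal_add (abs_nonneg _) (abs_nonneg _)]
          refine (add_le_add h2 h1).trans ?_
          rw [← add_mul, ← ENNReal.ofReal_add (by positivity) (by positivity)]
          gcongr
          rw [hM0]
          have : 0 ≤ (2:ℝ) * 36 ^ n * P.C := by positivity
          linarith
        · rintro x hx - ⟨t, ht, hd⟩
          have h3 := inU _ (hseg2 t ht)
          have h4 := infDist_ge Uᶜ (q + t • (x0 - q)) x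
          have h5 : min (infDist x Uᶜ) 1 ≤ 1 := min_le_right _ _
          rw [dist_comm] at hd
          have h6 : 1 ≤ min (infDist x Uᶜ) 1 := le_min (by linarith) le_rfl
          exact (hrp1 _ h6).trans (hk1 x hx)
      · rintro x hx ⟨t, ht, hd⟩
        have h3 := inU _ (hseg1 t ht)
        have h4 := infDist_ge Uᶜ (y + t • (q - y)) x
        rw [dist_comm] at hd
        exact (hrp1 _ (by linarith)).trans (hk1 x hx)
  have e : |φ y - Sav φ x0 (1 / 16) / W| = W⁻¹ * |Sav φ x0 (1 / 16) - W * φ y| := by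
    rw [← abs_of_pos (inv_pos.2 hWpos), ← abs_mul, abs_sub_comm]
    congr 1; field_simp
  have hI2 : I = ENNReal.ofReal L * ∫⁻ x in Ω, ‖fderiv ℝ φ x‖ₑ * kern U P.γ x y := by
    rw [hI, ← lintegral_const_mul' _ _ ENNReal.ofReal_ne_top]
    congr 1; ext x; simp only [hk]; ring
  rw [e, ENNReal.ofReal_mul (by positivity)]
  refine (mul_le_mul' le_rfl claim).trans ?_
  rw [hI2, ← mul_assoc, ← mul_assoc, ← ENNReal.ofReal_mul (by positivity),
    ← ENNReal.ofReal_mul (by positivity)]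
  have : W⁻¹ * M0 * L = M0 * L / W := by field_simp
  rw [this]

lemma riesz_fin {n : ℕ} (hn : 1 ≤ n) (R : ℝ) :
    ∫⁻ x in ball (0 : En n) R, ‖x‖ₑ ^ ((1:ℝ) - n) < ⊤ := by
  have : Nonempty (Fin n) := ⟨⟨0, by omega⟩⟩
  have : Nontrivial (En n) := inferInstance
  have h : IntegrableOn (fun x : En n => ‖x‖ ^ ((1:ℝ) - n)) (ball 0 R) := by
    rw [integrableOn_fun_norm_addHaar (volume : Measure (En n)) (f := fun y : ℝ => y ^ ((1:ℝ) - n))]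
    have : IntegrableOn (fun _ : ℝ => (1:ℝ)) (Ioo 0 R) :=
      integrableOn_const (by simp)
    refine this.congr_fun (fun y hy => ?_) measurableSet_Ioo
    simp only [finrank_euclideanSpace_fin, smul_eq_mul]
    rw [← Real.rpow_natCast, ← Real.rpow_add hy.1, Nat.cast_sub hn]
    simp
  have h2 := h.2
  rw [hasFiniteIntegral_iff_enorm] at h2
  refine lt_of_le_of_lt (lintegral_mono_ae ?_) h2
  refine ae_restrict_of_ae ?_
  filter_upwards [Measure.ae_ne (volume : Measure (En n)) 0] with x hx
  have hx' : 0 < ‖x‖ := norm_pos_iff.2 hx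
  rw [Real.enorm_of_nonneg (by positivity), ← ENNReal.ofReal_rpow_of_pos hx', ofReal_norm]

/-- Second part of the kernel. -/
lemma int_T {n : ℕ} {Ω U : Set (En n)} (hΩ : MeasurableSet Ω)
    (hU : IsOpen U) (hUne : Uᶜ.Nonempty) (hΩU : Ω ⊆ U) (hn : 1 ≤ n)
    (γ : ℝ → En n) (hγ : ContinuousOn γ (Icc 0 1)) (hγU : ∀ t ∈ Icc (0:ℝ) 1, γ t ∈ U)
    (h15 : 15 ≤ infDist (γ 1) Uᶜ) (T : En n → ℝ≥0∞)
    (hT : ∀ x ∈ Ω, T x ≤ ENNReal.ofReal (infDist x Uᶜ) ^ ((1:ℝ) - n))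
    (hT0 : ∀ x, T x ≠ 0 → ∃ t ∈ Icc (0:ℝ) 1, dist (γ t) x < infDist x Uᶜ / 2) :
    ∫⁻ x in Ω, T x ≤ volume Ω +
      8 * ENNReal.ofReal (6 ^ n) * volume (ball (0 : En n) 1) * eVariationOn γ (Icc 0 1) := by
  classical
  have hz : (1:ℝ) - n ≤ 0 := by
    have : (1:ℝ) ≤ n := by exact_mod_cast hn
    linarith
  have hdpos : ∀ x ∈ U, 0 < infDist x Uᶜ := fun x hx =>
    (hU.isClosed_compl.notMem_iff_infDist_pos hUne).1 (by simpa using hx)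
  obtain ⟨m, hm, hmle⟩ : ∃ d0 > 0, ∀ t ∈ Icc (0:ℝ) 1, d0 ≤ infDist (γ t) Uᶜ := by
    obtain ⟨t0, ht0, hmin⟩ := (isCompact_Icc (a := (0:ℝ)) (b := 1)).exists_isMinOn
      (by simp) ((continuous_infDist_pt (Uᶜ)).comp_continuousOn hγ)
    exact ⟨infDist (γ t0) Uᶜ, hdpos _ (hγU t0 ht0), fun t ht => hmin ht⟩
  obtain ⟨N, hN, hpart⟩ := exists_partition γ hγ (m / 64) (by positivity)
  have hNr : (0:ℝ) < N := by exact_mod_cast hN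
  set t : ℕ → ℝ := fun i => i / N with ht
  have tmono : Monotone t := fun i j hij => by
    simp only [ht]; gcongr
  have tmem : ∀ i ≤ N, t i ∈ Icc (0:ℝ) 1 := fun i hi =>
    ⟨by positivity, by rw [ht]; simp only; rw [div_le_one hNr]; exact_mod_cast hi⟩
  have h1 : t N = 1 := by simp only [ht]; field_simp
  set p : ℕ → En n := fun i => γ (t i) with hp
  set d : ℕ → ℝ := fun i => infDist (p i) Uᶜ with hd
  have hdm : ∀ i ≤ N, m ≤ d i := fun i hi => hmle _ (tmem i hi)
  have key : ∀ x ∈ Ω, T x ≤ 1 + ∑ k ∈ Finset.range N, (ball (p k) (3 * d k)).indicator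
      (fun _ => 8 * ENNReal.ofReal ((2 / d k) ^ n) * edist (p k) (p (k + 1))) x := by
    intro x hx
    have hdx := hdpos x (hΩU hx)
    set δ := infDist x Uᶜ with hδ
    by_cases hTx : T x = 0
    · rw [hTx]; exact zero_le
    obtain ⟨τ, hτ, hτd⟩ := hT0 x hTx
    by_cases hsN : dist (p N) x < 3 / 4 * δ
    · have h3 := infDist_ge Uᶜ (p N) x
      rw [dist_comm] at hsN
      have h4 : infDist (p N) Uᶜ = infDist (γ 1) Uᶜ := by simp only [hp, h1]
      have : 1 ≤ δ := by linarith
      refine (hT x hx).trans (le_trans ?_ le_self_add)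
      have := rpow_anti hz (show (1:ℝ≥0∞) ≤ ENNReal.ofReal δ by simpa using this)
      simpa using this
    · set i := ⌊τ * N⌋₊ with hi
      have hi0 : (i : ℝ) ≤ τ * N := Nat.floor_le (by have := hτ.1; positivity)
      have hi1 : τ * N < i + 1 := Nat.lt_floor_add_one _
      have hiN : i ≤ N := by
        have : (i : ℝ) ≤ N := by nlinarith [hτ.2]
        exact_mod_cast this
      have hpi : dist (p i) (γ τ) < m / 64 := by
        refine hpart _ (tmem i hiN) _ hτ ?_
        have a1 : (i : ℝ) / N ≤ τ := by rw [div_le_iff₀ hNr]; exact hi0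
        have a2 : τ ≤ (i + 1) / N := by rw [le_div_iff₀ hNr]; exact hi1.le
        simp only [ht]
        rw [abs_sub_comm, abs_of_nonneg (by linarith)]
        rw [add_div] at a2; linarith
      have hmδ : m ≤ 3 / 2 * δ := by
        have a1 := infDist_ge Uᶜ (γ τ) x
        have a2 := hmle τ hτ
        rw [dist_comm] at a1; linarith
      have hpix : dist (p i) x < 5 / 8 * δ := by
        have := dist_triangle (p i) (γ τ) x; linarith
      have hex : ∃ j, i ≤ j ∧ ¬ dist (p j) x < 3 / 4 * δ := ⟨N, hiN, hsN⟩
      set j := Nat.find hex with hj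
      obtain ⟨hij, hjs⟩ : i ≤ j ∧ ¬ dist (p j) x < 3 / 4 * δ := Nat.find_spec hex
      have hjN : j ≤ N := Nat.find_min' hex ⟨hiN, hsN⟩
      have hmin : ∀ k, i ≤ k → k < j → dist (p k) x < 3 / 4 * δ := by
        intro k hk hkj
        by_contra hcon
        exact Nat.find_min hex hkj ⟨hk, hcon⟩
      have hlen : ENNReal.ofReal δ ≤ 8 * ∑ k ∈ Finset.Ico i j, edist (p k) (p (k + 1)) := by
        have a1 : ENNReal.ofReal (δ / 8) ≤ edist (p i) (p j) := by
          rw [edist_dist]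
          apply ENNReal.ofReal_le_ofReal
          have := dist_triangle (p j) (p i) x
          rw [dist_comm (p j) (p i)] at this
          push Not at hjs
          linarith
        have a2 : ENNReal.ofReal δ = 8 * ENNReal.ofReal (δ / 8) := by
          rw [← ENNReal.ofReal_ofNat, ← ENNReal.ofReal_mul (by norm_num)]; congr 1; ring
        rw [a2]
        gcongr
        exact a1.trans (edist_le_Ico_sum_edist p hij)
      calc T x ≤ ENNReal.ofReal δ ^ ((1:ℝ) - n) := hT x hx
        _ = (ENNReal.ofReal δ)⁻¹ ^ n * ENNReal.ofReal δ := (inv_pow_mul hdx).symm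
        _ ≤ (ENNReal.ofReal δ)⁻¹ ^ n * (8 * ∑ k ∈ Finset.Ico i j, edist (p k) (p (k + 1))) := by
            gcongr
        _ = ∑ k ∈ Finset.Ico i j, (8 * (ENNReal.ofReal δ)⁻¹ ^ n * edist (p k) (p (k + 1))) := by
            rw [Finset.mul_sum, Finset.mul_sum]
            exact Finset.sum_congr rfl fun _ _ => by ring
        _ ≤ ∑ k ∈ Finset.Ico i j, (ball (p k) (3 * d k)).indicator
              (fun _ => 8 * ENNReal.ofReal ((2 / d k) ^ n) * edist (p k) (p (k + 1))) x := by
            refine Finset.sum_le_sum fun k hk => ?_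
            obtain ⟨hk1, hk2⟩ := Finset.mem_Ico.1 hk
            have b1 := hmin k hk1 hk2
            have b2 := infDist_ge Uᶜ (p k) x
            have b3 := infDist_ge Uᶜ x (p k)
            have b4 := hdm k (by omega)
            have b5 : d k = infDist (p k) Uᶜ := rfl
            have b6 : 0 < d k := by linarith
            rw [dist_comm] at b2
            rw [indicator_of_mem (by rw [mem_ball']; linarith)]
            gcongr
            rw [← ENNReal.ofReal_inv_of_pos hdx, ← ENNReal.ofReal_pow (by positivity)]
            apply ENNReal.ofReal_le_ofReal
            gcongr
            rw [inv_eq_one_div, div_le_div_iff₀ hdx b6]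
            linarith
        _ ≤ ∑ k ∈ Finset.range N, (ball (p k) (3 * d k)).indicator
              (fun _ => 8 * ENNReal.ofReal ((2 / d k) ^ n) * edist (p k) (p (k + 1))) x := by
            refine Finset.sum_le_sum_of_subset fun k hk => ?_
            have := (Finset.mem_Ico.1 hk).2
            exact Finset.mem_range.2 (by omega)
        _ ≤ _ := le_add_self
  calc ∫⁻ x in Ω, T x ≤ ∫⁻ x in Ω, (1 + ∑ k ∈ Finset.range N, (ball (p k) (3 * d k)).indicator
      (fun _ => 8 * ENNReal.ofReal ((2 / d k) ^ n) * edist (p k) (p (k + 1))) x) :=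
        setLIntegral_mono' hΩ key
    _ = volume Ω + ∑ k ∈ Finset.range N, ∫⁻ x in Ω, (ball (p k) (3 * d k)).indicator
      (fun _ => 8 * ENNReal.ofReal ((2 / d k) ^ n) * edist (p k) (p (k + 1))) x := by
        rw [lintegral_add_left measurable_const, lintegral_finsetSum]
        · simp
        · intro k _
          exact measurable_const.indicator measurableSet_ball
    _ ≤ volume Ω + ∑ k ∈ Finset.range N, 8 * ENNReal.ofReal (6 ^ n) * volume (ball (0 : En n) 1) *
          edist (p k) (p (k + 1)) := by
        gcongr with k hk
        refine (setLIntegral_le_lintegral _ _).trans ?_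
        have b4 := hdm k (Finset.mem_range.1 hk).le
        have b6 : 0 < d k := by linarith
        rw [lintegral_indicator_const measurableSet_ball, Measure.addHaar_ball_of_pos _ _
          (by positivity), finrank_euclideanSpace_fin]
        have : (6:ℝ) ^ n = (2 / d k) ^ n * (3 * d k) ^ n := by
          rw [← mul_pow]; congr 1; field_simp; norm_num
        rw [this, ENNReal.ofReal_mul (by positivity)]
        apply le_of_eq; ring
    _ ≤ _ := by
        rw [← Finset.mul_sum]
        gcongr
        have := sum_var γ (Icc (0:ℝ) 1) t tmono (fun _ => True) N
          (fun i hi _ => ⟨tmem i hi.le, tmem (i + 1) hi⟩)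
        simp only [if_true] at this
        exact this.trans (eVariationOn.mono γ inter_subset_left)

lemma near_meas {n : ℕ} {Ω U : Set (En n)} {x0 : En n} (P : PathSystem Ω U x0) :
    MeasurableSet {q : En n × En n | ∃ r : ℚ, (r : ℝ) ∈ Icc (0:ℝ) 1 ∧
      dist (P.γ q.2 r) q.1 < infDist q.1 Uᶜ / 2} := by
  have : {q : En n × En n | ∃ r : ℚ, (r : ℝ) ∈ Icc (0:ℝ) 1 ∧
      dist (P.γ q.2 r) q.1 < infDist q.1 Uᶜ / 2} = ⋃ r : ℚ, {q : En n × En n | (r : ℝ) ∈ Icc (0:ℝ) 1 ∧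
      dist (P.γ q.2 r) q.1 < infDist q.1 Uᶜ / 2} := by
    ext q; simp
  rw [this]
  refine MeasurableSet.iUnion fun r => ?_
  refine MeasurableSet.inter (MeasurableSet.const _) ?_
  have h1 : Measurable fun q : En n × En n => P.γ q.2 (r : ℝ) :=
    P.meas.comp (measurable_const.prodMk measurable_snd)
  exact measurableSet_lt (h1.dist measurable_fst)
    ((measurable_infDist.comp measurable_fst).div_const 2)

lemma kern_meas {n : ℕ} {Ω U : Set (En n)} {x0 : En n} (P : PathSystem Ω U x0) :
    Measurable fun q : En n × En n => kern U P.γ q.1 q.2 := by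
  unfold kern
  refine Measurable.add ((measurable_fst.edist measurable_snd).pow_const _) ?_
  refine Measurable.ite (near_meas P) ?_ measurable_const
  exact ((measurable_infDist.comp measurable_fst).ennreal_ofReal).pow_const _

/-- The measurable minorant of the weight. -/
def wOne {n : ℕ} (μ0 : Measure (En n)) (Ω U : Set (En n)) (γ : En n → ℝ → En n) (x : En n) :
    ℝ≥0∞ := ∫⁻ y in Ω, kern U γ x y ∂μ0

lemma wOne_meas {n : ℕ} {Ω U : Set (En n)} {x0 : En n} (P : PathSystem Ω U x0)
    (μ0 : Measure (En n)) [IsFiniteMeasure μ0] : Measurable (wOne μ0 Ω U P.γ) :=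
  (kern_meas P).lintegral_prod_right'

lemma wOne_le {n : ℕ} {Ω U : Set (En n)} {x0 : En n} (P : PathSystem Ω U x0)
    (hΩ : MeasurableSet Ω) (μ0 : Measure (En n)) (x : En n) :
    wOne μ0 Ω U P.γ x ≤ wZero μ0 Ω U P.γ x := by
  classical
  unfold wOne wZero kern
  rw [lintegral_add_left (f := fun y => edist x y ^ ((1:ℝ) - n))
    ((measurable_const.edist measurable_id).pow_const _)]
  refine add_le_add le_rfl ?_
  have hs : MeasurableSet {y : En n | ∃ r : ℚ, (r : ℝ) ∈ Icc (0:ℝ) 1 ∧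
      dist (P.γ y r) x < infDist x Uᶜ / 2} :=
    measurable_prodMk_left (x := x) (near_meas P)
  have e : (fun y : En n => if ∃ r : ℚ, (r : ℝ) ∈ Icc (0:ℝ) 1 ∧
      dist (P.γ y r) x < infDist x Uᶜ / 2 then ENNReal.ofReal (infDist x Uᶜ) ^ ((1:ℝ) - n) else 0)
      = {y : En n | ∃ r : ℚ, (r : ℝ) ∈ Icc (0:ℝ) 1 ∧
      dist (P.γ y r) x < infDist x Uᶜ / 2}.indicator
        (fun _ => ENNReal.ofReal (infDist x Uᶜ) ^ ((1:ℝ) - n)) := by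
    ext y; simp only [indicator, mem_ofPred_eq]
  have e' := lintegral_indicator_const (μ := μ0.restrict Ω) hs
    (ENNReal.ofReal (infDist x Uᶜ) ^ ((1:ℝ) - n))
  rw [← e] at e'
  refine (le_of_eq ?_).trans ((le_of_eq e').trans ?_)
  · congr!
  rw [mul_comm]
  refine mul_le_mul' ?_ le_rfl
  rw [Measure.restrict_apply hs]
  refine measure_mono ?_
  rintro y ⟨⟨r, hr, hd⟩, hy⟩
  exact ⟨hy, r, hr, hd.le⟩

lemma wOne_fin {n : ℕ} (hn : 1 ≤ n) {Ω U : Set (En n)}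
    (hΩ : MeasurableSet Ω) (hU : IsOpen U) (hUne : Uᶜ.Nonempty)
    (hΩU : Ω ⊆ U) (D : ℝ) (hdiam : ∀ x ∈ Ω, ∀ y ∈ Ω, dist x y ≤ D) (hvol : volume Ω ≠ ⊤)
    (x0 : En n) (h15 : 15 ≤ infDist x0 Uᶜ) (P : PathSystem Ω U x0)
    (μ0 : Measure (En n)) [IsFiniteMeasure μ0]
    (hgeo : (∫⁻ x in Ω, geoDist U x0 x ∂μ0) < ⊤) :
    ∫⁻ x in Ω, wOne μ0 Ω U P.γ x ≠ ⊤ := by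
  classical
  unfold wOne
  rw [lintegral_lintegral_swap (kern_meas P).aemeasurable]
  set R := ∫⁻ x in ball (0 : En n) (D + 1), ‖x‖ₑ ^ ((1:ℝ) - n) with hR
  have hRfin : R < ⊤ := riesz_fin hn _
  set B : ℝ≥0∞ := 8 * ENNReal.ofReal (6 ^ n) * volume (ball (0 : En n) 1) with hB
  have hBfin : B ≠ ⊤ := by
    refine ENNReal.mul_ne_top (ENNReal.mul_ne_top (by simp) (by simp)) measure_ball_lt_top.ne
  have key : ∀ y ∈ Ω, ∫⁻ x in Ω, kern U P.γ x y ≤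
      (R + volume Ω) + (B * ENNReal.ofReal P.C) * geoDist U x0 y := by
    intro y hy
    have hyU := hΩU hy
    unfold kern
    rw [lintegral_add_left (f := fun x => edist x y ^ ((1:ℝ) - n))
      ((measurable_id.edist measurable_const).pow_const _), add_assoc]
    refine add_le_add ?_ ?_
    · calc ∫⁻ x in Ω, edist x y ^ ((1:ℝ) - n)
          ≤ ∫⁻ x, (ball (0 : En n) (D + 1)).indicator (fun x => ‖x‖ₑ ^ ((1:ℝ) - n)) (x - y) := by
            rw [← lintegral_indicator hΩ]
            refine lintegral_mono fun x => ?_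
            by_cases hx : x ∈ Ω
            · rw [indicator_of_mem hx, indicator_of_mem, edist_eq_enorm_sub]
              rw [mem_ball_zero_iff, ← dist_eq_norm]
              have := hdiam x hx y hy
              linarith
            · rw [indicator_of_notMem hx]; exact zero_le
        _ = ∫⁻ x, (ball (0 : En n) (D + 1)).indicator (fun x => ‖x‖ₑ ^ ((1:ℝ) - n)) x :=
            lintegral_sub_right_eq_self
              ((ball (0 : En n) (D + 1)).indicator (fun x => ‖x‖ₑ ^ ((1:ℝ) - n))) y
        _ = R := lintegral_indicator measurableSet_ball _
    · have h := int_T hΩ hU hUne hΩU hn (P.γ y) (P.contOn y hyU) (P.mapsTo y hyU)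
        (by rw [P.ends y hyU]; exact h15) (fun x => if ∃ q : ℚ, (q : ℝ) ∈ Icc (0:ℝ) 1 ∧
          dist (P.γ y q) x < infDist x Uᶜ / 2 then
          ENNReal.ofReal (infDist x Uᶜ) ^ ((1:ℝ) - n) else 0)
        (fun x _ => by
          show (if _ then _ else _) ≤ _
          split_ifs
          · exact le_rfl
          · exact zero_le)
        (fun x hx => by
          by_cases hh : ∃ q : ℚ, (q : ℝ) ∈ Icc (0:ℝ) 1 ∧ dist (P.γ y q) x < infDist x Uᶜ / 2
          · obtain ⟨q, hq, hd⟩ := hh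
            exact ⟨q, hq, hd⟩
          · exact absurd (if_neg hh) hx)
      refine (le_of_eq ?_).trans (h.trans ?_)
      · congr!
      · rw [mul_assoc B]
        exact add_le_add le_rfl (mul_le_mul' le_rfl (P.total_len y hyU))
  refine ne_top_of_le_ne_top ?_ (setLIntegral_mono' hΩ key)
  rw [lintegral_add_left measurable_const, lintegral_const_mul' _ _
    (ENNReal.mul_ne_top hBfin (by simp))]
  refine ENNReal.add_ne_top.2 ⟨?_, ENNReal.mul_ne_top (ENNReal.mul_ne_top hBfin (by simp)) hgeo.ne⟩
  rw [lintegral_const]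
  exact ENNReal.mul_ne_top (ENNReal.add_ne_top.2 ⟨hRfin.ne, hvol⟩) (measure_ne_top _ _)

lemma l1_le_l2 {n : ℕ} (ν : Measure (En n)) [IsFiniteMeasure ν] (v : Lp (En n) 2 ν) :
    ∫ x, ‖v x‖ ∂ν ≤ (ν univ ^ ((1:ℝ) / 2)).toReal * ‖v‖ := by
  rw [integral_norm_eq_lintegral_enorm (Lp.aestronglyMeasurable v), ← eLpNorm_one_eq_lintegral_enorm,
    Lp.norm_def, ← ENNReal.toReal_mul]
  refine ENNReal.toReal_mono (ENNReal.mul_ne_top ?_ (Lp.eLpNorm_ne_top v)) ?_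
  · exact ENNReal.rpow_ne_top_of_nonneg (by norm_num) (measure_ne_top _ _)
  · have := eLpNorm_le_eLpNorm_mul_rpow_measure_univ (μ := ν) (p := 1) (q := 2)
      (by norm_num) (Lp.aestronglyMeasurable v)
    rw [mul_comm]
    refine this.trans (le_of_eq ?_)
    congr 2
    norm_num

lemma duality {n : ℕ} (ν : Measure (En n)) [IsFiniteMeasure ν] {V : Type*} [AddCommGroup V]
    [Module ℝ V] (T : V →ₗ[ℝ] Lp (En n) 2 ν) (l : V →ₗ[ℝ] ℝ) (c : ℝ) (hc : 0 ≤ c)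
    (hl : ∀ v, |l v| ≤ c * ∫ x, ‖T v x‖ ∂ν) :
    ∃ h : Lp (En n) 2 ν, (∀ᵐ x ∂ν, ‖h x‖ ≤ c) ∧ ∀ v, ∫ x, ⟪h x, T v x⟫ ∂ν = l v := by
  have hint : ∀ v : Lp (En n) 2 ν, Integrable v ν := fun v =>
    (Lp.memLp v).integrable (by norm_num)
  obtain ⟨s, hs⟩ := T.rangeRestrict.exists_rightInverse_of_surjective T.range_rangeRestrict
  have hs' : ∀ y : LinearMap.range T, T (s y) = y := fun y => by
    have := congrArg (fun f => ((f y : LinearMap.range T) : Lp (En n) 2 ν)) hs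
    simpa using this
  let f : Lp (En n) 2 ν →ₗ.[ℝ] ℝ := ⟨LinearMap.range T, l ∘ₗ s⟩
  obtain ⟨g, hgf, hgN⟩ := exists_extension_of_le_sublinear f (fun v => c * ∫ x, ‖v x‖ ∂ν)
    (fun a ha v => by
      have : ∫ x, ‖(a • v : Lp (En n) 2 ν) x‖ ∂ν = ∫ x, a * ‖v x‖ ∂ν := by
        refine integral_congr_ae ?_
        filter_upwards [Lp.coeFn_smul a v] with x hx
        rw [hx, Pi.smul_apply, norm_smul, Real.norm_of_nonneg ha.le]
      simp only [this, integral_const_mul]; ring)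
    (fun v w => by
      have : ∫ x, ‖(v + w : Lp (En n) 2 ν) x‖ ∂ν ≤ ∫ x, (‖v x‖ + ‖w x‖) ∂ν := by
        refine integral_mono_ae (hint _).norm ((hint _).norm.add (hint _).norm) ?_
        filter_upwards [Lp.coeFn_add v w] with x hx
        rw [hx]; exact norm_add_le _ _
      rw [integral_add (hint _).norm (hint _).norm] at this
      rw [← mul_add]
      exact mul_le_mul_of_nonneg_left this hc)
    (fun y => by
      have := hl (s y)
      rw [hs'] at this
      exact (le_abs_self _).trans this)
  have hgT : ∀ v, g (T v) = l v := fun v => by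
    have h1 := hgf ⟨T v, LinearMap.mem_range_self T v⟩
    have h2 : f ⟨T v, LinearMap.mem_range_self T v⟩ = l (s ⟨T v, LinearMap.mem_range_self T v⟩) := rfl
    rw [h2] at h1
    refine h1.trans ?_
    have h3 := hl (s ⟨T v, LinearMap.mem_range_self T v⟩ - v)
    have h4 : T (s ⟨T v, LinearMap.mem_range_self T v⟩ - v) = 0 := by
      rw [map_sub, hs']; simp
    have h5 : ∫ x, ‖(0 : Lp (En n) 2 ν) x‖ ∂ν = 0 := by
      rw [← integral_zero (En n) ℝ (μ := ν)]
      refine integral_congr_ae ?_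
      filter_upwards [Lp.coeFn_zero (En n) 2 ν] with x hx
      rw [hx]; simp
    rw [h4, h5, mul_zero, map_sub] at h3
    have := abs_nonpos_iff.1 h3
    linarith
  have hgabs : ∀ v, ‖g v‖ ≤ c * ∫ x, ‖v x‖ ∂ν := fun v => by
    rw [Real.norm_eq_abs, abs_le]
    refine ⟨?_, hgN v⟩
    have h1 := hgN (-v)
    have : ∫ x, ‖(-v : Lp (En n) 2 ν) x‖ ∂ν = ∫ x, ‖v x‖ ∂ν := by
      refine integral_congr_ae ?_
      filter_upwards [Lp.coeFn_neg v] with x hx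
      rw [hx]; simp
    rw [map_neg] at h1
    simp only [this] at h1
    linarith
  let G := g.mkContinuous (c * (ν univ ^ ((1:ℝ) / 2)).toReal) (fun v => (hgabs v).trans (by
    rw [mul_assoc]; exact mul_le_mul_of_nonneg_left (l1_le_l2 ν v) hc))
  set h := (InnerProductSpace.toDual ℝ (Lp (En n) 2 ν)).symm G with hh
  have hG : ∀ v, ∫ x, ⟪h x, v x⟫ ∂ν = g v := fun v => by
    rw [← L2.inner_def, hh, InnerProductSpace.toDual_symm_apply]
    rfl
  refine ⟨h, ?_, fun v => by rw [hG, hgT]⟩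
  set A : Set (En n) := {x | c < ‖h x‖} with hA
  have hAm : MeasurableSet A := measurableSet_lt measurable_const
    (Lp.stronglyMeasurable h).measurable.norm
  set v0 : En n → En n := A.indicator (fun x => ‖h x‖⁻¹ • h x) with hv0
  have hv0m : Measurable v0 := Measurable.indicator
    ((Lp.stronglyMeasurable h).measurable.norm.inv.smul (Lp.stronglyMeasurable h).measurable) hAm
  have hv0n : ∀ x, ‖v0 x‖ = A.indicator 1 x := fun x => by
    by_cases hx : x ∈ A
    · have : 0 < ‖h x‖ := lt_of_le_of_lt hc hx
      rw [hv0, indicator_of_mem hx, indicator_of_mem hx, norm_smul, norm_inv, norm_norm]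
      simp; field_simp
    · rw [hv0, indicator_of_notMem hx, indicator_of_notMem hx]; simp
  have hv0L : MemLp v0 2 ν := MemLp.of_bound hv0m.aestronglyMeasurable 1
    (Filter.Eventually.of_forall fun x => by
      rw [hv0n]; exact indicator_le_self' (fun _ _ => zero_le_one) x)
  have hco := hv0L.coeFn_toLp
  have h1 := hgN (hv0L.toLp v0)
  rw [← hG] at h1
  have e1 : ∫ x, ⟪h x, hv0L.toLp v0 x⟫ ∂ν = ∫ x, A.indicator (fun x => ‖h x‖) x ∂ν := by
    refine integral_congr_ae ?_
    filter_upwards [hco] with x hx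
    rw [hx]
    by_cases hxA : x ∈ A
    · have : 0 < ‖h x‖ := lt_of_le_of_lt hc hxA
      rw [hv0, indicator_of_mem hxA, indicator_of_mem hxA, inner_smul_right,
        real_inner_self_eq_norm_sq]
      field_simp
    · rw [hv0, indicator_of_notMem hxA, indicator_of_notMem hxA]; simp
  have e2 : ∫ x, ‖hv0L.toLp v0 x‖ ∂ν = ∫ x, A.indicator (fun _ => (1:ℝ)) x ∂ν := by
    refine integral_congr_ae ?_
    filter_upwards [hco] with x hx
    rw [hx, hv0n]; rfl
  simp only [e2] at h1
  rw [e1, ← integral_const_mul] at h1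
  have i1 : Integrable (A.indicator (fun x => ‖h x‖)) ν := (hint h).norm.indicator hAm
  have i2 : Integrable (fun x => c * A.indicator (fun _ => (1:ℝ)) x) ν :=
    ((integrable_const (1:ℝ)).indicator hAm).const_mul c
  have h2 : ∫ x, (A.indicator (fun x => ‖h x‖) x - c * A.indicator (fun _ => (1:ℝ)) x) ∂ν ≤ 0 := by
    rw [integral_sub i1 i2]; linarith
  have hnn : ∀ x, 0 ≤ A.indicator (fun x => ‖h x‖) x - c * A.indicator (fun _ => (1:ℝ)) x := by
    intro x
    by_cases hxA : x ∈ A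
    · rw [indicator_of_mem hxA, indicator_of_mem hxA]
      have : c < ‖h x‖ := hxA
      linarith
    · rw [indicator_of_notMem hxA, indicator_of_notMem hxA]; simp
  have h3 := (integral_eq_zero_iff_of_nonneg hnn (i1.sub i2)).1
    (le_antisymm h2 (integral_nonneg hnn))
  filter_upwards [h3] with x hx
  by_contra hcon
  have hxA : x ∈ A := not_le.1 hcon
  simp only [indicator_of_mem hxA, Pi.zero_apply] at hx
  have : c < ‖h x‖ := hxA
  linarith

/-- The space of Lipschitz functions. -/
def lipSub (n : ℕ) : Submodule ℝ (En n → ℝ) where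
  carrier := {φ | ∃ K : ℝ≥0, LipschitzWith K φ}
  zero_mem' := ⟨0, LipschitzWith.const 0⟩
  add_mem' := by
    rintro φ ψ ⟨K, hK⟩ ⟨L, hL⟩
    exact ⟨K + L, hK.add hL⟩
  smul_mem' := by
    rintro c φ ⟨K, hK⟩
    refine ⟨‖c‖₊ * K, LipschitzWith.of_dist_le_mul fun x y => ?_⟩
    have := hK.dist_le_mul x y
    simp only [Pi.smul_apply, dist_smul₀]
    push_cast
    rw [mul_assoc]
    exact mul_le_mul_of_nonneg_left this (norm_nonneg _)

lemma grad_norm {n : ℕ} (φ : En n → ℝ) (x : En n) : ‖gradient φ x‖ = ‖fderiv ℝ φ x‖ := by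
  unfold gradient
  exact LinearIsometryEquiv.norm_map _ _

lemma grad_meas {n : ℕ} (φ : En n → ℝ) : Measurable (gradient φ) := by
  unfold gradient
  exact (LinearIsometryEquiv.continuous _).measurable.comp (measurable_fderiv ℝ φ)

lemma grad_memLp {n : ℕ} (ν : Measure (En n)) [IsFiniteMeasure ν] (φ : lipSub n) :
    MemLp (gradient (φ : En n → ℝ)) 2 ν := by
  obtain ⟨K, hK⟩ := φ.2
  refine MemLp.of_bound (grad_meas _).aestronglyMeasurable K (Filter.Eventually.of_forall fun x => ?_)
  rw [grad_norm]
  exact norm_fderiv_le_of_lipschitz ℝ hK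

/-- The gradient as a linear map. -/
def gradL {n : ℕ} (ν : Measure (En n)) [IsFiniteMeasure ν] (hν : ν ≪ volume) :
    lipSub n →ₗ[ℝ] Lp (En n) 2 ν where
  toFun φ := (grad_memLp ν φ).toLp _
  map_add' φ ψ := by
    rw [← MemLp.toLp_add, MemLp.toLp_eq_toLp_iff]
    obtain ⟨K, hK⟩ := φ.2
    obtain ⟨L, hL⟩ := ψ.2
    filter_upwards [hν.ae_le hK.ae_differentiableAt, hν.ae_le hL.ae_differentiableAt] with x h1 h2
    simp only [Submodule.coe_add, Pi.add_apply, gradient]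
    rw [fderiv_add h1 h2, map_add]
  map_smul' c φ := by
    rw [RingHom.id_apply, ← MemLp.toLp_const_smul, MemLp.toLp_eq_toLp_iff]
    obtain ⟨K, hK⟩ := φ.2
    filter_upwards [hν.ae_le hK.ae_differentiableAt] with x h1
    simp only [Submodule.coe_smul, Pi.smul_apply, gradient]
    rw [fderiv_const_smul h1]
    simp

lemma main_dual {n : ℕ} {Ω : Set (En n)} (w : En n → ℝ≥0∞) (hw : Measurable w)
    (hwf : ∫⁻ x in Ω, w x ≠ ⊤) (l : lipSub n →ₗ[ℝ] ℝ) (c : ℝ) (hc : 0 ≤ c)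
    (hl : ∀ φ : lipSub n, ENNReal.ofReal |l φ| ≤
      ENNReal.ofReal c * ∫⁻ x in Ω, ‖fderiv ℝ (φ : En n → ℝ) x‖ₑ * w x) :
    ∃ u : En n → En n, Measurable u ∧
      (∀ᵐ x ∂volume.restrict Ω, ENNReal.ofReal ‖u x‖ ≤ ENNReal.ofReal c * w x) ∧
      ∀ φ : lipSub n, ∫ x in Ω, ⟪u x, gradient (φ : En n → ℝ) x⟫ = l φ := by
  set ν := (volume.restrict Ω).withDensity w with hνd
  have : IsFiniteMeasure ν := isFiniteMeasure_withDensity hwf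
  have hν : ν ≪ volume := (withDensity_absolutelyContinuous _ _).trans
    Measure.absolutelyContinuous_restrict
  have hco : ∀ φ : lipSub n, gradL ν hν φ =ᵐ[ν] gradient (φ : En n → ℝ) := fun φ =>
    (grad_memLp ν φ).coeFn_toLp
  obtain ⟨h, hb, hh⟩ := duality ν (gradL ν hν) l c hc (fun φ => by
    have e1 : ∫ x, ‖gradL ν hν φ x‖ ∂ν = ∫ x, ‖gradient (φ : En n → ℝ) x‖ ∂ν := by
      refine integral_congr_ae ?_
      filter_upwards [hco φ] with x hx
      rw [hx]
    have hi : Integrable (gradient (φ : En n → ℝ)) ν := (grad_memLp ν φ).integrable (by norm_num)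
    have e2 : ∫⁻ x in Ω, ‖fderiv ℝ (φ : En n → ℝ) x‖ₑ * w x =
        ENNReal.ofReal (∫ x, ‖gradient (φ : En n → ℝ) x‖ ∂ν) := by
      rw [ofReal_integral_norm_eq_lintegral_enorm hi, hνd,
        lintegral_withDensity_eq_lintegral_mul _ hw (grad_meas _).enorm]
      refine lintegral_congr fun x => ?_
      rw [Pi.mul_apply, mul_comm, ← ofReal_norm, ← ofReal_norm, grad_norm]
    have h1 := hl φ
    rw [e2, ← ENNReal.ofReal_mul hc] at h1
    rw [e1]
    exact (ENNReal.ofReal_le_ofReal_iff (by positivity)).1 h1)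
  have hwt : ∀ᵐ x ∂volume.restrict Ω, w x < ⊤ := ae_lt_top hw hwf
  refine ⟨fun x => (w x).toReal • h x, hw.ennreal_toReal.smul
    (Lp.stronglyMeasurable h).measurable, ?_, fun φ => ?_⟩
  · rw [ae_withDensity_iff hw] at hb
    filter_upwards [hb, hwt] with x hx hxt
    rw [norm_smul, Real.norm_of_nonneg ENNReal.toReal_nonneg,
      ENNReal.ofReal_mul ENNReal.toReal_nonneg, ENNReal.ofReal_toReal hxt.ne, mul_comm]
    by_cases h0 : w x = 0
    · simp [h0]
    · exact mul_le_mul' (ENNReal.ofReal_le_ofReal (hx h0)) le_rfl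
  · rw [← hh φ]
    have e : ∫ x, ⟪h x, gradL ν hν φ x⟫ ∂ν = ∫ x, ⟪h x, gradient (φ : En n → ℝ) x⟫ ∂ν := by
      refine integral_congr_ae ?_
      filter_upwards [hco φ] with x hx
      rw [hx]
    rw [e]
    refine Eq.trans ?_ (integral_withDensity_eq_integral_toReal_smul hw hwt
      (fun x => ⟪h x, gradient (φ : En n → ℝ) x⟫)).symm
    refine integral_congr_ae (Filter.Eventually.of_forall fun x => ?_)
    simp only [inner_smul_left]
    simp

lemma lip_int {n : ℕ} {Ω : Set (En n)} (hb : Bornology.IsBounded Ω) (m : Measure (En n))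
    [IsFiniteMeasure m] (φ : En n → ℝ) (hφ : Continuous φ) : IntegrableOn φ Ω m :=
  (hφ.continuousOn.integrableOn_compact hb.isCompact_closure).mono_set subset_closure

/-- The functional. -/
def sigL {n : ℕ} {Ω : Set (En n)} (hb : Bornology.IsBounded Ω) (μ : SignedMeasure (En n)) :
    lipSub n →ₗ[ℝ] ℝ where
  toFun φ := - signedIntegral μ Ω φ
  map_add' φ ψ := by
    obtain ⟨K, hK⟩ := φ.2
    obtain ⟨L, hL⟩ := ψ.2
    simp only [signedIntegral, Submodule.coe_add, Pi.add_apply]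
    rw [integral_add (lip_int hb _ _ hK.continuous) (lip_int hb _ _ hL.continuous),
      integral_add (lip_int hb _ _ hK.continuous) (lip_int hb _ _ hL.continuous)]
    ring
  map_smul' c φ := by
    simp only [signedIntegral, Submodule.coe_smul, Pi.smul_apply, smul_eq_mul, RingHom.id_apply]
    rw [integral_const_mul, integral_const_mul]
    ring

lemma sig_bound {n : ℕ} {Ω : Set (En n)} (hΩ : MeasurableSet Ω) (hb : Bornology.IsBounded Ω)
    (μ : SignedMeasure (En n)) (hμ : μ Ω = 0) (μ0 : Measure (En n)) (κ : ℝ)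
    (htv : μ.totalVariation ≤ ENNReal.ofReal κ • μ0) (φ : En n → ℝ) (hφ : Continuous φ) (a : ℝ) :
    ENNReal.ofReal |signedIntegral μ Ω φ| ≤
      ENNReal.ofReal κ * ∫⁻ y in Ω, ENNReal.ofReal |φ y - a| ∂μ0 := by
  set p := μ.toJordanDecomposition.posPart with hp
  set q := μ.toJordanDecomposition.negPart with hq
  have hpq : p.real Ω = q.real Ω := by
    have h1 := SignedMeasure.toSignedMeasure_toJordanDecomposition μ
    have h2 : μ Ω = p.real Ω - q.real Ω := by
      conv_lhs => rw [← h1]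
      rw [JordanDecomposition.toSignedMeasure, _root_.sub_apply,
        Measure.toSignedMeasure_apply_measurable hΩ, Measure.toSignedMeasure_apply_measurable hΩ]
    linarith
  have e : signedIntegral μ Ω φ = (∫ x in Ω, (φ x - a) ∂p) - ∫ x in Ω, (φ x - a) ∂q := by
    rw [integral_sub (lip_int hb _ _ hφ) (integrable_const a),
      integral_sub (lip_int hb _ _ hφ) (integrable_const a)]
    simp only [integral_const, measureReal_restrict_apply_univ, hpq, signedIntegral, smul_eq_mul]
    ring
  have hle : ∀ m : Measure (En n), ENNReal.ofReal |∫ x in Ω, (φ x - a) ∂m| ≤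
      ∫⁻ y in Ω, ENNReal.ofReal |φ y - a| ∂m := fun m => by
    have := enorm_integral_le_lintegral_enorm (μ := m.restrict Ω) (fun x => φ x - a)
    simpa only [Real.enorm_eq_ofReal_abs] using this
  have h3 := abs_sub (∫ x in Ω, (φ x - a) ∂p) (∫ x in Ω, (φ x - a) ∂q)
  rw [e]
  refine (ENNReal.ofReal_le_ofReal h3).trans ?_
  rw [ENNReal.ofReal_add (abs_nonneg _) (abs_nonneg _)]
  refine (add_le_add (hle p) (hle q)).trans ?_
  rw [← lintegral_add_measure, ← Measure.restrict_add]
  have h4 : (p + q).restrict Ω ≤ (ENNReal.ofReal κ • μ0).restrict Ω :=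
    Measure.restrict_mono le_rfl htv
  refine (lintegral_mono' h4 le_rfl).trans ?_
  rw [Measure.restrict_smul, lintegral_smul_measure, smul_eq_mul]

/-- In the setting of Proposition 2.1 (normalization, path system,
`d_Ω̂ ∈ L¹(μ0)`, weight `w0 = I₁μ0 + ω d̂^{1−n}`), for every `κ > 0` and every finite
signed Radon measure `μ` on `Ω` with `μ(Ω) = 0`, `|μ| ≤ κ μ0`, there is a measurable
vector field `u` with `|u| ≤ C κ w0` a.e. on `Ω` such that `∫_Ω u·∇φ = −∫_Ω φ dμ` for
every Lipschitz function `φ : ℝⁿ → ℝ`. -/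
theorem stmt_9 (n : ℕ) (hn : 1 ≤ n) (Ω Ot : Set (En n))
    (hΩopen : IsOpen Ω) (hΩconn : IsConnected Ω) (hΩbdd : Bornology.IsBounded Ω)
    (hcov : Ω ⊆ Ot) (hcovnull : volume (Ot \ Ω) = 0)
    (x0 : En n) (hx0 : x0 ∈ Ω)
    (hnorm1 : Metric.closedBall x0 1 ⊆ Ω)
    (hnorm2 : 15 ≤ Metric.infDist x0 (hatSet Ot)ᶜ)
    (P : PathSystem Ω (hatSet Ot) x0)
    (μ0 : Measure (En n)) [IsFiniteMeasure μ0] (hμ0ne : μ0 ≠ 0) (hμ0supp : μ0 Ωᶜ = 0)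
    (hgeo : (∫⁻ x in Ω, geoDist (hatSet Ot) x0 x ∂μ0) < ⊤) :
    ∃ C : ℝ, 0 < C ∧
      ∀ κ : ℝ, 0 < κ →
        ∀ μ : MeasureTheory.SignedMeasure (En n),
          μ Ω = 0 → μ.totalVariation ≤ ENNReal.ofReal κ • μ0 →
          ∃ u : En n → En n, Measurable u ∧
            (∀ᵐ x ∂volume.restrict Ω,
              ENNReal.ofReal ‖u x‖ ≤
                ENNReal.ofReal (C * κ) * wZero μ0 Ω (hatSet Ot) P.γ x) ∧
            ∀ φ : En n → ℝ, (∃ K : ℝ≥0, LipschitzWith K φ) →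
              ∫ x in Ω, ⟪u x, gradient φ x⟫ = - signedIntegral μ Ω φ := by
  have hΩm : MeasurableSet Ω := hΩopen.measurableSet
  have hvol : volume Ω ≠ ⊤ := hΩbdd.measure_lt_top.ne
  have hOtne : Otᶜ.Nonempty := by
    rw [nonempty_compl]
    intro h
    have : Nonempty (Fin n) := ⟨⟨0, by omega⟩⟩
    have h1 : volume (univ : Set (En n)) = ⊤ := measure_univ_of_isAddLeftInvariant _
    have h2 : volume (univ : Set (En n)) ≤ volume Ω + volume (Ot \ Ω) := by
      refine (measure_mono ?_).trans (measure_union_le _ _)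
      rw [h]; intro x _
      by_cases hx : x ∈ Ω
      · exact Or.inl hx
      · exact Or.inr ⟨trivial, hx⟩
    rw [hcovnull, add_zero, h1] at h2
    exact hvol (top_le_iff.1 h2)
  have hUOt : hatSet Ot ⊆ Ot := fun x hx => hx.1
  have hUeq : hatSet Ot = {x | 0 < Metric.infDist x Otᶜ} := by
    ext x
    refine ⟨fun h => h.2, fun h => ⟨?_, h⟩⟩
    by_contra hx
    have h' : 0 < Metric.infDist x Otᶜ := h
    rw [infDist_zero_of_mem (show x ∈ Otᶜ from hx)] at h'
    exact lt_irrefl _ h'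
  have hU : IsOpen (hatSet Ot) := by
    rw [hUeq]; exact isOpen_lt continuous_const (continuous_infDist_pt _)
  have hΩU : Ω ⊆ hatSet Ot := by
    intro x hx
    refine ⟨hcov hx, ?_⟩
    refine (infDist_pos_iff_notMem_closure hOtne).1 ?_
    intro hcl
    obtain ⟨z, hz, hz'⟩ := mem_closure_iff.1 hcl Ω hΩopen hx
    exact hz' (hcov hz)
  have hUne : (hatSet Ot)ᶜ.Nonempty := hOtne.mono (compl_subset_compl.2 hUOt)
  have hnull : volume (hatSet Ot \ Ω) = 0 :=
    measure_mono_null (sdiff_subset_sdiff_left hUOt) hcovnull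
  obtain ⟨D0, hD0⟩ := Metric.isBounded_iff.1 hΩbdd
  have hdiam : ∀ x ∈ Ω, ∀ y ∈ Ω, dist x y ≤ max D0 1 := fun x hx y hy =>
    (hD0 hx hy).trans (le_max_left _ _)
  obtain ⟨M, hM, hpw⟩ := pw_all hn hΩm hnull hU hUne hΩU (max D0 1) (le_max_right _ _) hdiam
    x0 hnorm2 P
  refine ⟨M, hM, fun κ hκ μ hμ htv => ?_⟩
  have hwfin := wOne_fin hn hΩm hU hUne hΩU (max D0 1) hdiam hvol x0 hnorm2 P μ0 hgeo
  obtain ⟨u, hu, hub, hue⟩ := main_dual (Ω := Ω) (wOne μ0 Ω (hatSet Ot) P.γ) (wOne_meas P μ0)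
    hwfin (sigL hΩbdd μ) (M * κ) (by positivity) (fun φ => by
      obtain ⟨K, hK⟩ := φ.2
      obtain ⟨a, ha⟩ := hpw φ K hK
      have h1 := sig_bound hΩm hΩbdd μ hμ μ0 κ htv φ hK.continuous a
      have h2 : |sigL hΩbdd μ φ| = |signedIntegral μ Ω φ| := abs_neg _
      rw [h2]
      refine h1.trans ?_
      have hmk : Measurable fun q : En n × En n =>
          ‖fderiv ℝ (φ : En n → ℝ) q.1‖ₑ * kern (hatSet Ot) P.γ q.1 q.2 :=
        ((measurable_fderiv ℝ (φ : En n → ℝ)).comp measurable_fst).enorm.mul (kern_meas P)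
      calc _ ≤ ENNReal.ofReal κ * ∫⁻ y in Ω, ENNReal.ofReal M *
            (∫⁻ x in Ω, ‖fderiv ℝ (φ : En n → ℝ) x‖ₑ * kern (hatSet Ot) P.γ x y) ∂μ0 :=
            mul_le_mul' le_rfl (setLIntegral_mono' hΩm ha)
        _ = ENNReal.ofReal (M * κ) * ∫⁻ y in Ω,
            (∫⁻ x in Ω, ‖fderiv ℝ (φ : En n → ℝ) x‖ₑ * kern (hatSet Ot) P.γ x y) ∂μ0 := by
            rw [lintegral_const_mul' _ _ ENNReal.ofReal_ne_top, ← mul_assoc,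
              ← ENNReal.ofReal_mul hκ.le, mul_comm κ M]
        _ = ENNReal.ofReal (M * κ) * ∫⁻ x in Ω,
            ∫⁻ y in Ω, ‖fderiv ℝ (φ : En n → ℝ) x‖ₑ * kern (hatSet Ot) P.γ x y ∂μ0 := by
            congr 1
            exact (lintegral_lintegral_swap (f := fun x y =>
              ‖fderiv ℝ (φ : En n → ℝ) x‖ₑ * kern (hatSet Ot) P.γ x y) hmk.aemeasurable).symm
        _ = _ := by
            congr 1
            refine lintegral_congr fun x => ?_
            rw [lintegral_const_mul' _ _ enorm_ne_top, wOne])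
  refine ⟨u, hu, ?_, fun φ hφ => hue ⟨φ, hφ⟩⟩
  filter_upwards [hub] with x hx
  exact hx.trans (mul_le_mul' le_rfl (wOne_le P hΩm μ0 x))
end
end

section
/- Let Ω ⊂ ℝⁿ be a bounded domain, a ∈ Ω, 0 < ε < n−1, c > 0 and r0 > 0. Let μ0 be a finite positive Radon measure on Ω with μ0({a}) = 0, μ0(B(a,r)) ≥ c r^{n−1−ε} for all 0 < r < r0, and 0 < m0 := μ0(B(a,r0)) < μ0(Ω)/2. Define the signed measure μ := μ0⌞B(a,r0) − (m0/(μ0(Ω) − m0)) μ0⌞(Ω \ B(a,r0)). Then μ(Ω) = 0, |μ| ≤ μ0, μ(B(a,r)) ≥ c r^{n−1−ε} for all 0 < r < r0, and there is no essentially bounded measurable vector field u : Ω → ℝⁿ satisfying ∫_Ω u·∇φ dx = −∫_Ω φ dμ for all φ ∈ C^∞(ℝⁿ) with compact support. -/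
open MeasureTheory Metric Set
open scoped RealInnerProductSpace ENNReal NNReal

noncomputable section

/-- The signed measure `μ := μ0⌞B(a,r0) − (m0/(μ0(Ω) − m0)) μ0⌞(Ω \ B(a,r0))`, where
`m0 = μ0(B(a,r0))`. -/
def ctrMeasure {n : ℕ} (μ0 : MeasureTheory.Measure (En n))
    [MeasureTheory.IsFiniteMeasure μ0] (Ω : Set (En n)) (a : En n) (r0 : ℝ) :
    MeasureTheory.SignedMeasure (En n) :=
  (μ0.restrict (Metric.ball a r0)).toSignedMeasure -
    ((μ0 (Metric.ball a r0)).toReal /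
        ((μ0 Ω).toReal - (μ0 (Metric.ball a r0)).toReal)) •
      (μ0.restrict (Ω \ Metric.ball a r0)).toSignedMeasure

lemma exists_test {n : ℕ} (a : En n) : ∃ C : ℝ, 0 ≤ C ∧ ∀ r : ℝ, 0 < r → ∃ φ : En n → ℝ,
    ContDiff ℝ (⊤ : ℕ∞) φ ∧ HasCompactSupport φ ∧ (∀ x, 0 ≤ φ x) ∧ (∀ x, φ x ≤ 1) ∧
    (∀ x ∈ ball a r, φ x = 1) ∧ (∀ x, x ∉ ball a (2 * r) → φ x = 0) ∧
    (∀ x, ‖gradient φ x‖ ≤ C / r) ∧ (∀ x, x ∉ closedBall a (2 * r) → gradient φ x = 0) := by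
  let f : ContDiffBump (0 : En n) := ⟨1, 2, by norm_num, by norm_num⟩
  obtain ⟨C, hC⟩ := ContDiff.lipschitzWith_of_hasCompactSupport (𝕂 := ℝ) (n := 1)
    f.hasCompactSupport f.contDiff (by simp)
  refine ⟨C, C.2, fun r hr => ?_⟩
  have hnorm : ∀ x, ‖r⁻¹ • (x - a)‖ = dist x a / r := by
    intro x
    rw [norm_smul, dist_eq_norm, Real.norm_of_nonneg (by positivity)]
    field_simp
  have hzero : ∀ x, x ∉ ball a (2 * r) → f (r⁻¹ • (x - a)) = 0 := by
    intro x hx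
    apply f.zero_of_le_dist
    rw [dist_zero_right, hnorm]
    change (2 : ℝ) ≤ _
    rw [le_div_iff₀ hr]
    simpa using hx
  have hts : tsupport (fun x => f (r⁻¹ • (x - a))) ⊆ closedBall a (2 * r) := by
    refine closure_minimal ?_ isClosed_closedBall
    intro x hx
    by_contra h
    exact hx (hzero x (fun h' => h (ball_subset_closedBall h')))
  refine ⟨fun x => f (r⁻¹ • (x - a)), ?_, ?_, fun x => f.nonneg, fun x => f.le_one, ?_, hzero,
    ?_, ?_⟩
  · exact f.contDiff.comp (by fun_prop : ContDiff ℝ _ (fun x : En n => r⁻¹ • (x - a)))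
  · exact (isCompact_closedBall a (2 * r)).of_isClosed_subset (isClosed_tsupport _) hts
  · intro x hx
    apply f.one_of_mem_closedBall
    rw [mem_closedBall, dist_zero_right, hnorm]
    change _ ≤ (1 : ℝ)
    rw [div_le_one hr]
    exact (mem_ball.1 hx).le
  · intro x
    have hl : LipschitzWith (C * (r⁻¹).toNNReal) (fun x => f (r⁻¹ • (x - a))) := by
      refine LipschitzWith.of_dist_le_mul fun x y => ?_
      refine (hC.dist_le_mul _ _).trans ?_
      rw [NNReal.coe_mul, Real.coe_toNNReal _ (by positivity), dist_smul₀, dist_sub_right,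
        Real.norm_of_nonneg (by positivity), mul_assoc]
    have := norm_fderiv_le_of_lipschitz ℝ hl (x₀ := x)
    rw [gradient, LinearIsometryEquiv.norm_map]
    rwa [NNReal.coe_mul, Real.coe_toNNReal _ (by positivity), ← div_eq_mul_inv] at this
  · intro x hx
    rw [gradient, fderiv_of_notMem_tsupport ℝ (fun h => hx (hts h)), map_zero]

lemma ctr_jordan {n : ℕ} (μ0 : Measure (En n)) [IsFiniteMeasure μ0] (Ω : Set (En n))
    (a : En n) (r0 : ℝ) (k : ℝ≥0) (hk : (k : ℝ) = (μ0 (Metric.ball a r0)).toReal /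
        ((μ0 Ω).toReal - (μ0 (Metric.ball a r0)).toReal)) :
    (ctrMeasure μ0 Ω a r0).toJordanDecomposition.posPart = μ0.restrict (ball a r0) ∧
    (ctrMeasure μ0 Ω a r0).toJordanDecomposition.negPart =
      k • μ0.restrict (Ω \ ball a r0) := by
  have hs : (μ0.restrict (ball a r0)) ⟂ₘ (k • μ0.restrict (Ω \ ball a r0)) := by
    refine ⟨(ball a r0)ᶜ, measurableSet_ball.compl, ?_, ?_⟩
    · rw [Measure.restrict_apply measurableSet_ball.compl]; simp
    · rw [compl_compl, Measure.smul_apply, Measure.restrict_apply measurableSet_ball]; simp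
  have := SignedMeasure.toJordanDecomposition_eq (s := ctrMeasure μ0 Ω a r0)
    (j := ⟨μ0.restrict (ball a r0), k • μ0.restrict (Ω \ ball a r0), hs⟩) (by
      rw [JordanDecomposition.toSignedMeasure, ctrMeasure, ← hk]
      simp only [Measure.toSignedMeasure_smul]
      rfl)
  rw [this]
  exact ⟨rfl, rfl⟩

/-- (Remark 1.1 (ii).) Let `Ω ⊆ ℝⁿ` (`n ≥ 2`) be a bounded domain,
`a ∈ Ω`, `0 < ε < n−1`, `c > 0`, `r0 > 0`, and let `μ0` be a finite positive Radon
measure on `Ω` with `μ0({a}) = 0`, `μ0(B(a,r)) ≥ c r^{n−1−ε}` for `0 < r < r0`, and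
`0 < m0 := μ0(B(a,r0)) < μ0(Ω)/2`. Then the signed measure
`μ := μ0⌞B(a,r0) − (m0/(μ0(Ω)−m0)) μ0⌞(Ω \ B(a,r0))` satisfies `μ(Ω) = 0`, `|μ| ≤ μ0`,
`μ(B(a,r)) ≥ c r^{n−1−ε}` for `0 < r < r0`, and there is no essentially bounded
measurable vector field `u` solving `∫_Ω u·∇φ = −∫_Ω φ dμ` for all compactly supported
smooth `φ`. -/
theorem stmt_12 (n : ℕ) (hn : 2 ≤ n) (Ω : Set (En n))
    (hΩopen : IsOpen Ω) (hΩconn : IsConnected Ω) (hΩbdd : Bornology.IsBounded Ω)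
    (a : En n) (ha : a ∈ Ω) (ε c r0 : ℝ)
    (hε0 : 0 < ε) (hε1 : ε < (n : ℝ) - 1) (hc : 0 < c) (hr0 : 0 < r0)
    (μ0 : Measure (En n)) [IsFiniteMeasure μ0] (hμ0supp : μ0 Ωᶜ = 0)
    (hatom : μ0 {a} = 0)
    (hgrowth : ∀ r : ℝ, 0 < r → r < r0 →
      ENNReal.ofReal (c * r ^ ((n : ℝ) - 1 - ε)) ≤ μ0 (Metric.ball a r))
    (hm0pos : 0 < μ0 (Metric.ball a r0))
    (hm0half : μ0 (Metric.ball a r0) < μ0 Ω / 2) :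
    ctrMeasure μ0 Ω a r0 Ω = 0 ∧
    (ctrMeasure μ0 Ω a r0).totalVariation ≤ μ0 ∧
    (∀ r : ℝ, 0 < r → r < r0 →
      c * r ^ ((n : ℝ) - 1 - ε) ≤ ctrMeasure μ0 Ω a r0 (Metric.ball a r)) ∧
    ¬ ∃ u : En n → En n, Measurable u ∧
        (∃ M : ℝ, ∀ᵐ x ∂volume.restrict Ω, ‖u x‖ ≤ M) ∧
        ∀ φ : En n → ℝ, ContDiff ℝ (⊤ : ℕ∞) φ → HasCompactSupport φ →
          ∫ x in Ω, ⟪u x, gradient φ x⟫ = - signedIntegral (ctrMeasure μ0 Ω a r0) Ω φ := by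
  have hB : MeasurableSet (ball a r0) := measurableSet_ball
  have hΩm : MeasurableSet Ω := hΩopen.measurableSet
  set m0 := (μ0 (ball a r0)).toReal with hm0
  set mΩ := (μ0 Ω).toReal with hmΩ
  have hm : 0 < m0 := ENNReal.toReal_pos hm0pos.ne' (measure_ne_top _ _)
  have hhalf : m0 < mΩ / 2 := by
    have := (ENNReal.toReal_lt_toReal (measure_ne_top _ _)
      (ENNReal.div_ne_top (measure_ne_top _ _) (by norm_num))).2 hm0half
    simpa [ENNReal.toReal_div] using this
  have hk0 : 0 ≤ m0 / (mΩ - m0) := div_nonneg hm.le (by linarith)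
  have hk1 : m0 / (mΩ - m0) ≤ 1 := by rw [div_le_one (by linarith)]; linarith
  lift m0 / (mΩ - m0) to ℝ≥0 using hk0 with k hk
  obtain ⟨hpos, hneg⟩ := ctr_jordan μ0 Ω a r0 k hk
  have haeΩ : ∀ᵐ x ∂μ0, x ∈ Ω := by rw [ae_iff]; exact hμ0supp
  have happ : ∀ s, MeasurableSet s → ctrMeasure μ0 Ω a r0 s =
      μ0.real (s ∩ ball a r0) - k * μ0.real (s ∩ (Ω \ ball a r0)) := by
    intro s hs
    rw [ctrMeasure, ← hm0, ← hmΩ, ← hk, VectorMeasure.sub_apply, VectorMeasure.smul_apply,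
      Measure.toSignedMeasure_apply_measurable hs, Measure.toSignedMeasure_apply_measurable hs,
      measureReal_restrict_apply hs, measureReal_restrict_apply hs, smul_eq_mul]
  have hΩB : μ0.real (Ω ∩ ball a r0) = m0 := by
    rw [hm0, Measure.real, measure_congr]
    filter_upwards [haeΩ] with x hx
    apply propext
    exact ⟨fun h => h.2, fun h => ⟨hx, h⟩⟩
  refine ⟨?_, ?_, ?_, ?_⟩
  · rw [happ Ω hΩm, hΩB]
    have h2 : μ0.real (Ω ∩ (Ω \ ball a r0)) = mΩ - m0 := by
      have := measureReal_inter_add_sdiff (μ := μ0) (s := Ω) hB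
      rw [hΩB] at this
      rw [inter_eq_self_of_subset_right diff_subset, hmΩ]
      change _ = μ0.real Ω - m0
      linarith
    rw [h2, hk, div_mul_cancel₀ _ (by linarith), sub_self]
  · rw [SignedMeasure.totalVariation, hpos, hneg]
    have h1 : k • μ0.restrict (Ω \ ball a r0) ≤ μ0.restrict (ball a r0)ᶜ := by
      refine Measure.le_iff.2 fun s hs => ?_
      have hk1' : (k : ℝ≥0∞) ≤ 1 := by exact_mod_cast hk1
      calc (k • μ0.restrict (Ω \ ball a r0)) s = k * μ0.restrict (Ω \ ball a r0) s := rfl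
        _ ≤ 1 * μ0.restrict (ball a r0)ᶜ s := by
          gcongr
          exact fun x hx => hx.2
        _ = _ := one_mul _
    calc _ ≤ μ0.restrict (ball a r0) + μ0.restrict (ball a r0)ᶜ := by gcongr
      _ = μ0 := Measure.restrict_add_restrict_compl hB
  · intro r hr hr'
    have hsub : ball a r ⊆ ball a r0 := ball_subset_ball hr'.le
    rw [happ _ measurableSet_ball, inter_eq_self_of_subset_left hsub]
    have : ball a r ∩ (Ω \ ball a r0) = ∅ := by
      ext x
      simp only [mem_inter_iff, mem_diff, mem_empty_iff_false, iff_false]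
      exact fun h => h.2.2 (hsub h.1)
    rw [this]
    simp only [measureReal_empty, mul_zero, sub_zero]
    exact (ENNReal.ofReal_le_iff_le_toReal (measure_ne_top _ _)).1 (hgrowth r hr hr')
  · rintro ⟨u, -, ⟨M, hM⟩, hu⟩
    obtain ⟨C, hC0, hC⟩ := exists_test a
    haveI : Nontrivial (En n) := by
      haveI : Nonempty (Fin n) := ⟨⟨0, by omega⟩⟩
      infer_instance
    set V := (volume (ball (0 : En n) 1)).toReal with hV
    have key : ∀ r : ℝ, 0 < r → 2 * r ≤ r0 →
        c ≤ (|M| * C * 2 ^ n * V) * r ^ ε := by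
      intro r hr hr2
      obtain ⟨φ, h1, h2, h3, h4, h5, h6, h7, h8⟩ := hC r hr
      have hsub2 : ball a (2 * r) ⊆ ball a r0 := ball_subset_ball hr2
      have heq := hu φ h1 h2
      have hφc : Continuous φ := h1.continuous
      rw [signedIntegral, hpos, hneg] at heq
      have hz : ∫ x in Ω, φ x ∂(k • μ0.restrict (Ω \ ball a r0)) = 0 := by
        apply integral_eq_zero_of_ae
        apply ae_restrict_of_ae
        apply Measure.ae_smul_measure
        filter_upwards [ae_restrict_mem (hΩm.diff hB)] with x hx
        exact h6 x (fun h => hx.2 (hsub2 h))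
      have hge : μ0.real (ball a r) ≤ ∫ x in Ω, φ x ∂(μ0.restrict (ball a r0)) := by
        rw [Measure.restrict_eq_self_of_ae_mem (ae_restrict_of_ae haeΩ)]
        have hint : Integrable φ (μ0.restrict (ball a r0)) :=
          hφc.integrable_of_hasCompactSupport h2
        calc μ0.real (ball a r) = ∫ x in ball a r0, (ball a r).indicator 1 x ∂μ0 := by
              rw [integral_indicator_one measurableSet_ball,
                measureReal_restrict_apply measurableSet_ball,
                inter_eq_self_of_subset_left (ball_subset_ball (by linarith))]
          _ ≤ _ := by
              refine integral_mono ((integrable_const 1).indicator measurableSet_ball) hint ?_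
              intro x
              by_cases hx : x ∈ ball a r
              · simp [hx, h5 x hx]
              · simp only [indicator_of_notMem hx]; exact h3 x
      have hlow : c * r ^ ((n : ℝ) - 1 - ε) ≤ μ0.real (ball a r) :=
        (ENNReal.ofReal_le_iff_le_toReal (measure_ne_top _ _)).1 (hgrowth r hr (by linarith))
      have hres : ∫ x in Ω ∩ closedBall a (2 * r), ⟪u x, gradient φ x⟫ =
          ∫ x in Ω, ⟪u x, gradient φ x⟫ := by
        symm
        apply setIntegral_eq_of_subset_of_forall_diff_eq_zero hΩm inter_subset_left
        intro x hx
        rw [h8 x (fun h => hx.2 ⟨hx.1, h⟩), inner_zero_right]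
      have hvol : volume.real (closedBall a (2 * r)) = (2 * r) ^ n * V := by
        rw [Measure.real, Measure.addHaar_closedBall _ _ (by positivity), ENNReal.toReal_mul,
          ENNReal.toReal_ofReal (by positivity), finrank_euclideanSpace_fin]
      have hfin : volume (Ω ∩ closedBall a (2 * r)) < ⊤ :=
        (measure_mono inter_subset_right).trans_lt measure_closedBall_lt_top
      have hup : ‖∫ x in Ω ∩ closedBall a (2 * r), ⟪u x, gradient φ x⟫‖ ≤
          (|M| * (C / r)) * volume.real (Ω ∩ closedBall a (2 * r)) := by
        apply norm_setIntegral_le_of_norm_le_const_ae hfin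
        have hM' := ae_mono (Measure.restrict_mono (inter_subset_left (t := closedBall a (2 * r)))
          le_rfl) hM
        filter_upwards [hM'] with x hx
        refine (norm_inner_le_norm _ _).trans ?_
        exact mul_le_mul (hx.trans (le_abs_self M)) (h7 x) (norm_nonneg _) (abs_nonneg _)
      have hup2 : (|M| * (C / r)) * volume.real (Ω ∩ closedBall a (2 * r)) ≤
          (|M| * (C / r)) * ((2 * r) ^ n * V) := by
        rw [← hvol]
        gcongr
        · exact measure_closedBall_lt_top.ne
        · exact inter_subset_right
      rw [hz, sub_zero] at heq
      rw [hres, heq, norm_neg] at hup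
      have hfinal : c * r ^ ((n : ℝ) - 1 - ε) ≤ (|M| * (C / r)) * ((2 * r) ^ n * V) :=
        hlow.trans (hge.trans ((le_abs_self _).trans (hup.trans hup2)))
      have e1 : r ^ ((n : ℝ) - 1 - ε) * r ^ ε = r ^ n / r := by
        rw [← Real.rpow_add hr, sub_add_cancel, Real.rpow_sub hr, Real.rpow_natCast,
          Real.rpow_one]
      have hp : 0 < r ^ ((n : ℝ) - 1 - ε) := Real.rpow_pos_of_pos hr _
      refine le_of_mul_le_mul_right ?_ hp
      calc c * r ^ ((n : ℝ) - 1 - ε) ≤ _ := hfinal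
        _ = |M| * C * 2 ^ n * V * (r ^ n / r) := by rw [mul_pow]; ring
        _ = _ := by rw [← e1]; ring
    have hlim : Filter.Tendsto (fun r : ℝ => (|M| * C * 2 ^ n * V) * r ^ ε)
        (nhdsWithin 0 (Ioi 0)) (nhds 0) := by
      have : Filter.Tendsto (fun r : ℝ => (|M| * C * 2 ^ n * V) * r ^ ε) (nhds 0)
          (nhds ((|M| * C * 2 ^ n * V) * 0 ^ ε)) :=
        ((Real.continuousAt_rpow_const 0 ε (Or.inr hε0.le)).tendsto).const_mul _
      rw [Real.zero_rpow hε0.ne', mul_zero] at this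
      exact this.mono_left nhdsWithin_le_nhds
    have : c ≤ 0 := by
      refine ge_of_tendsto hlim ?_
      filter_upwards [Ioo_mem_nhdsGT (show (0 : ℝ) < r0 / 2 by linarith)] with r hr
      exact key r hr.1 (by linarith [hr.2])
    linarith
end
end

section
/- Let 0 < ε < 1/2, let (h_k)_{k∈ℕ} ⊂ (0,1) be a strictly decreasing sequence with limit 0, and for k ∈ ℕ set L_k := [0, 1−ε] × {h_k} if k is even and L_k := [ε, 1] × {h_k} if k is odd. Let Ω := (0,1)² \ ⋃_{k∈ℕ} L_k, and fix a point (x0,y0) ∈ Ω with y0 > h_0. If Σ_{k∈ℕ} k (h_k − h_{k+1}) < +∞, then the geodesic distance d_Ω to (x0,y0) in Ω (the infimum of lengths of rectifiable curves joining a point to (x0,y0) inside Ω) is integrable on Ω with respect to the two-dimensional Lebesgue measure. -/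
open MeasureTheory Metric Set
open scoped RealInnerProductSpace ENNReal NNReal

noncomputable section

theorem aux_step {U : Set (En 2)} {z p q : En 2}
    (hseg : ∀ t ∈ Set.Icc (0:ℝ) 1, AffineMap.lineMap p q t ∈ U) :
    geoDist U z p ≤ edist p q + geoDist U z q := by
  conv_rhs => unfold geoDist
  simp only [ENNReal.add_iInf]
  refine le_iInf fun γ => le_iInf fun hc => le_iInf fun hm => le_iInf fun h0 => le_iInf fun h1 => ?_
  let l : ℝ → En 2 := fun t => AffineMap.lineMap p q t
  let g : ℝ → En 2 := fun t => if t ≤ 1/2 then l (2*t) else γ (2*t-1)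
  have e1 : EqOn g (l ∘ fun t => 2*t) (Icc 0 (1/2)) := by
    intro t ht
    simp only [g, if_pos ht.2, Function.comp]
  have e2 : EqOn g (γ ∘ fun t => 2*t-1) (Icc (1/2) 1) := by
    intro t ht
    by_cases h : t ≤ 1/2
    · have : t = 1/2 := le_antisymm h ht.1
      subst this
      simp [g, l, h0]
    · simp only [g, if_neg h, Function.comp]
  have m1 : MapsTo (fun t : ℝ => 2*t) (Icc 0 (1/2)) (Icc 0 1) := by
    intro t ht; constructor <;> simp only <;> linarith [ht.1, ht.2]
  have m2 : MapsTo (fun t : ℝ => 2*t-1) (Icc (1/2) 1) (Icc 0 1) := by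
    intro t ht; constructor <;> simp only <;> linarith [ht.1, ht.2]
  have hun : Icc (0:ℝ) 1 = Icc 0 (1/2) ∪ Icc (1/2) 1 := by
    rw [Icc_union_Icc_eq_Icc] <;> norm_num
  have hlip : LipschitzWith (nndist p q) l := lipschitzWith_lineMap p q
  have gc : ContinuousOn g (Icc 0 1) := by
    rw [hun]
    refine ContinuousOn.union_of_isClosed ?_ ?_ isClosed_Icc isClosed_Icc
    · exact ((hlip.continuous.comp (by fun_prop)).continuousOn).congr e1
    · exact (hc.comp (by fun_prop) m2).congr e2
  have gm : MapsTo g (Icc 0 1) U := by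
    rw [hun]
    rintro t (ht | ht)
    · rw [e1 ht]; exact hseg _ (m1 ht)
    · rw [e2 ht]; exact hm (m2 ht)
  have g0 : g 0 = p := by simp [g, l]
  have g1 : g 1 = z := by
    rw [e2 (by constructor <;> norm_num)]; norm_num [h1]
  have hv : eVariationOn g (Icc 0 1) ≤ edist p q + eVariationOn γ (Icc 0 1) := by
    have := eVariationOn.Icc_add_Icc g (s := univ) (a := (0:ℝ)) (b := 1/2) (c := 1)
      (by norm_num) (by norm_num) (mem_univ _)
    simp only [univ_inter] at this
    rw [← this]
    gcongr
    · rw [eVariationOn.eq_of_eqOn e1]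
      refine (eVariationOn.comp_le_of_monotoneOn l _ ?_ m1).trans ?_
      · intro a _ b _ hab; simp only; linarith
      · have := hlip.lipschitzOnWith (s := univ) |>.comp_eVariationOn_le (g := id)
          (s := Icc (0:ℝ) 1) (mapsTo_univ _ _)
        refine this.trans ?_
        have h2 := (monotoneOn_id (s := (univ : Set ℝ))).eVariationOn_eq
          (mem_univ (0:ℝ)) (mem_univ (1:ℝ))
        rw [univ_inter] at h2
        rw [h2]
        simp
    · rw [eVariationOn.eq_of_eqOn e2]
      refine eVariationOn.comp_le_of_monotoneOn γ _ ?_ m2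
      intro a _ b _ hab; simp only; linarith
  refine le_trans ?_ hv
  unfold geoDist
  exact iInf_le_of_le g (iInf_le_of_le gc (iInf_le_of_le gm (iInf_le_of_le g0
    (iInf_le_of_le g1 le_rfl))))

theorem aux_self {U : Set (En 2)} {z : En 2} (hz : z ∈ U) : geoDist U z z = 0 := by
  refine le_antisymm ?_ bot_le
  unfold geoDist
  refine iInf_le_of_le (fun _ => z) (iInf_le_of_le continuousOn_const (iInf_le_of_le
    (fun _ _ => hz) (iInf_le_of_le rfl (iInf_le_of_le rfl ?_))))
  exact (eVariationOn.constant_on (by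
    rintro _ ⟨_, _, rfl⟩ _ ⟨_, _, rfl⟩; rfl)).le

theorem aux_edist {p q : En 2} (hp : ∀ i, p i ∈ Ioo (0:ℝ) 1) (hq : ∀ i, q i ∈ Ioo (0:ℝ) 1) :
    edist p q ≤ 2 := by
  rw [edist_dist]
  refine ENNReal.ofReal_le_of_le_toReal ?_
  rw [EuclideanSpace.dist_eq]
  have h0 := hp 0
  have h1 := hp 1
  have h2 := hq 0
  have h3 := hq 1
  simp only [Fin.sum_univ_two, Real.dist_eq, sq_abs, mem_Ioo] at *
  apply Real.sqrt_le_iff.2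
  norm_num
  nlinarith

theorem aux_vol (a b c d : ℝ) :
    volume {p : En 2 | p 0 ∈ Ioc a b ∧ p 1 ∈ Ioc c d} = ENNReal.ofReal (b - a) * ENNReal.ofReal (d - c) := by
  have := (EuclideanSpace.volume_preserving_symm_measurableEquiv_toLp (Fin 2)).measure_preimage_equiv
    (Set.pi univ ![Ioc a b, Ioc c d])
  rw [volume_pi_pi] at this
  simp only [Fin.prod_univ_two, Matrix.cons_val_zero, Matrix.cons_val_one, Real.volume_Ioc] at this
  rw [← this]
  congr 1
  ext p
  simp [Set.mem_pi, Fin.forall_fin_two]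

/-- the gap in the slit -/
def aux_gap (ε : ℝ) (k : ℕ) : Set ℝ := if Even k then Ioo (1 - ε) 1 else Ioo 0 ε

theorem aux_line (p q : En 2) (t : ℝ) (i : Fin 2) :
    (AffineMap.lineMap p q t : En 2) i = AffineMap.lineMap (p i) (q i) t := by
  simp [AffineMap.lineMap_apply]

theorem aux_conv {s : Set ℝ} (hs : Convex ℝ s) {a b t : ℝ} (ha : a ∈ s) (hb : b ∈ s)
    (ht : t ∈ Icc (0:ℝ) 1) : AffineMap.lineMap a b t ∈ s :=
  hs.lineMap_mem ha hb ht

theorem aux_gap_conv (ε : ℝ) (k : ℕ) : Convex ℝ (aux_gap ε k) := by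
  unfold aux_gap; split_ifs <;> exact convex_Ioo _ _

theorem aux_geo (ε : ℝ) (hε0 : 0 < ε) (hε1 : ε < 1 / 2)
    (h : ℕ → ℝ) (hh : StrictAnti h) (hmem : ∀ k, h k ∈ Set.Ioo (0:ℝ) 1)
    (Ω : Set (En 2))
    (hΩ : ∀ p : En 2, p ∈ Ω ↔ (∀ i, p i ∈ Ioo (0:ℝ) 1) ∧ ∀ k, p 1 = h k → p 0 ∈ aux_gap ε k)
    (z0 : En 2) (hz0 : z0 ∈ Ω) (hz0y : h 0 < z0 1) (k : ℕ) :
    ∀ p ∈ Ω, h k < p 1 → geoDist Ω z0 p ≤ ENNReal.ofReal (4 * (k + 1)) := by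
  induction k with
  | zero =>
    intro p hp hk
    have hpp := (hΩ p).1 hp
    have hzz := (hΩ z0).1 hz0
    refine (aux_step (q := z0) ?_).trans ?_
    · intro t ht
      rw [hΩ]
      refine ⟨fun i => ?_, fun j hj => ?_⟩
      · rw [aux_line]; exact aux_conv (convex_Ioo 0 1) (hpp.1 i) (hzz.1 i) ht
      · exfalso
        rw [aux_line] at hj
        have : _ ∈ Ioi (h 0) := aux_conv (convex_Ioi (h 0)) hk hz0y ht
        rw [hj] at this
        exact absurd this (not_lt.2 (hh.antitone (Nat.zero_le j)))
    · rw [aux_self hz0, add_zero]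
      refine (aux_edist hpp.1 hzz.1).trans ?_
      rw [← ENNReal.ofReal_ofNat]
      exact ENNReal.ofReal_le_ofReal (by norm_num)
  | succ k ih =>
    intro p hp hk
    rcases lt_or_ge (h k) (p 1) with hlt | hle
    · refine (ih p hp hlt).trans (ENNReal.ofReal_le_ofReal ?_)
      push_cast; linarith
    have hpp := (hΩ p).1 hp
    obtain ⟨b, hb1, hb2, hb3⟩ : ∃ b, h k < b ∧ b < 1 ∧ ∀ j, j < k → b < h j := by
      rcases k with _ | k
      · obtain ⟨b, hb⟩ := exists_between (hmem 0).2
        exact ⟨b, hb.1, hb.2, fun j hj => absurd hj (by omega)⟩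
      · obtain ⟨b, hb⟩ := exists_between (hh (Nat.lt_succ_self k))
        exact ⟨b, hb.1, hb.2.trans (hmem k).2, fun j hj =>
          hb.2.trans_le (hh.antitone (by omega))⟩
    obtain ⟨g, hg, hg01⟩ : ∃ g, g ∈ aux_gap ε k ∧ g ∈ Ioo (0:ℝ) 1 := by
      unfold aux_gap
      split_ifs
      · exact ⟨1 - ε/2, ⟨by linarith, by linarith⟩, ⟨by linarith, by linarith⟩⟩
      · exact ⟨ε/2, ⟨by linarith, by linarith⟩, ⟨by linarith, by linarith⟩⟩
    have huniq : ∀ y, h (k+1) < y → y ≤ b → ∀ j, y = h j → j = k := by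
      intro y hy1 hy2 j hj
      subst hj
      have := hh.lt_iff_gt.1 hy1
      by_contra hne
      have := hb3 j (by omega)
      linarith
    let q : En 2 := !₂[g, p 1]
    let r : En 2 := !₂[g, b]
    have q0 : q 0 = g := rfl
    have q1 : q 1 = p 1 := rfl
    have r0 : r 0 = g := rfl
    have r1 : r 1 = b := rfl
    have hq : ∀ i, q i ∈ Ioo (0:ℝ) 1 := by
      intro i; fin_cases i
      · exact hg01
      · exact hpp.1 1
    have hr : ∀ i, r i ∈ Ioo (0:ℝ) 1 := by
      intro i; fin_cases i
      · exact hg01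
      · exact ⟨(hmem k).1.trans hb1, hb2⟩
    have s1 : ∀ t ∈ Set.Icc (0:ℝ) 1, AffineMap.lineMap p q t ∈ Ω := by
      intro t ht
      rw [hΩ]
      refine ⟨fun i => ?_, fun j hj => ?_⟩
      · rw [aux_line]; exact aux_conv (convex_Ioo 0 1) (hpp.1 i) (hq i) ht
      · rw [aux_line, q1, AffineMap.lineMap_same_apply] at hj
        have hjk := huniq _ hk (hle.trans hb1.le) j hj
        rw [aux_line]
        refine aux_conv (aux_gap_conv ε j) (hpp.2 j hj) ?_ ht
        rw [hjk]; exact hg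
    have s2 : ∀ t ∈ Set.Icc (0:ℝ) 1, AffineMap.lineMap q r t ∈ Ω := by
      intro t ht
      rw [hΩ]
      refine ⟨fun i => ?_, fun j hj => ?_⟩
      · rw [aux_line]; exact aux_conv (convex_Ioo 0 1) (hq i) (hr i) ht
      · rw [aux_line] at hj
        have hm : _ ∈ Ioc (h (k+1)) b := aux_conv (convex_Ioc (h (k+1)) b) (a := q 1) (b := r 1)
          ⟨hk, hle.trans hb1.le⟩ ⟨(hh (Nat.lt_succ_self k)).trans hb1, le_rfl⟩ ht
        have hjk := huniq _ hm.1 hm.2 j hj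
        rw [aux_line, q0, r0, AffineMap.lineMap_same_apply, hjk]
        exact hg
    have hrΩ : r ∈ Ω := by
      have := s2 1 ⟨zero_le_one, le_rfl⟩
      rwa [AffineMap.lineMap_apply_one] at this
    calc geoDist Ω z0 p ≤ edist p q + (edist q r + geoDist Ω z0 r) :=
          (aux_step s1).trans (add_le_add le_rfl (aux_step s2))
      _ ≤ 2 + (2 + ENNReal.ofReal (4 * (k + 1))) := by
          gcongr
          · exact aux_edist hpp.1 hq
          · exact aux_edist hq hr
          · exact ih r hrΩ hb1
      _ = ENNReal.ofReal (4 * ((k + 1 : ℕ) + 1)) := by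
          rw [← ENNReal.ofReal_ofNat 2, ← ENNReal.ofReal_add (by norm_num) (by positivity),
            ← ENNReal.ofReal_add (by norm_num) (by positivity)]
          congr 1; push_cast; ring

/-- (Example 2.1.) Let `0 < ε < 1/2`, let `(h_k) ⊂ (0,1)` be strictly
decreasing to `0`, and remove from the unit square `(0,1)²` the slits
`L_k = [0,1−ε] × {h_k}` (`k` even) and `L_k = [ε,1] × {h_k}` (`k` odd); let `Ω` be the
resulting domain and fix `(x0,y0) ∈ Ω` with `y0 > h_0`. If `Σ_k k (h_k − h_{k+1}) < ∞`,
then the geodesic distance in `Ω` to `(x0,y0)` is integrable on `Ω` for the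
two-dimensional Lebesgue measure. -/
theorem stmt_17 (ε : ℝ) (hε0 : 0 < ε) (hε1 : ε < 1 / 2)
    (h : ℕ → ℝ) (hh : StrictAnti h) (hmem : ∀ k, h k ∈ Set.Ioo (0:ℝ) 1)
    (hlim : Filter.Tendsto h Filter.atTop (nhds 0))
    (hsum : Summable fun k : ℕ => (k : ℝ) * (h k - h (k + 1)))
    (L : ℕ → Set (En 2))
    (hL : ∀ k, L k =
      if Even k then {p : En 2 | p 0 ∈ Set.Icc (0:ℝ) (1 - ε) ∧ p 1 = h k}
      else {p : En 2 | p 0 ∈ Set.Icc ε 1 ∧ p 1 = h k})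
    (Ω : Set (En 2))
    (hΩ : Ω = {p : En 2 | p 0 ∈ Set.Ioo (0:ℝ) 1 ∧ p 1 ∈ Set.Ioo (0:ℝ) 1} \ ⋃ k, L k)
    (z0 : En 2) (hz0 : z0 ∈ Ω) (hz0y : h 0 < z0 1) :
    (∫⁻ p in Ω, geoDist Ω z0 p ∂volume) < ⊤ := by
  have hΩ' : ∀ p : En 2, p ∈ Ω ↔
      (∀ i, p i ∈ Ioo (0:ℝ) 1) ∧ ∀ k, p 1 = h k → p 0 ∈ aux_gap ε k := by
    intro p
    rw [hΩ]
    simp only [mem_sdiff, mem_ofPred_eq, mem_iUnion, not_exists, Fin.forall_fin_two]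
    refine and_congr_right fun hp => forall_congr' fun k => ?_
    have := hp.1.1
    have := hp.1.2
    rw [hL]
    unfold aux_gap
    split_ifs
    · simp only [mem_ofPred_eq, mem_Icc, mem_Ioo]; grind
    · simp only [mem_ofPred_eq, mem_Icc, mem_Ioo]; grind
  have hgeo := aux_geo ε hε0 hε1 h hh hmem Ω hΩ' z0 hz0 hz0y
  let S : ℕ → Set (En 2) := fun k => {p | p 0 ∈ Ioc (0:ℝ) 1 ∧ p 1 ∈ Ioc (h (k+1)) (h k)}
  let T : Set (En 2) := {p | p 0 ∈ Ioc (0:ℝ) 1 ∧ p 1 ∈ Ioc (h 0) 1}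
  have hcov : Ω ⊆ (Ω ∩ T) ∪ ⋃ k, (Ω ∩ S k) := by
    intro p hp
    have hpp := ((hΩ' p).1 hp).1
    by_cases h0 : h 0 < p 1
    · exact Or.inl ⟨hp, ⟨(hpp 0).1, (hpp 0).2.le⟩, h0, (hpp 1).2.le⟩
    · right
      have hex : ∃ k, h k < p 1 := (hlim.eventually (gt_mem_nhds (hpp 1).1)).exists
      classical
      have hf := Nat.find_spec hex
      have hmin := fun m => Nat.find_min hex (m := m)
      rcases hn : Nat.find hex with _ | n
      · rw [hn] at hf; exact absurd hf h0
      · rw [hn] at hf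
        exact mem_iUnion.2 ⟨n, hp, ⟨(hpp 0).1, (hpp 0).2.le⟩, hf, not_lt.1 (hmin n (by omega))⟩
  have hd : ∀ k, 0 < h k - h (k+1) := fun k => sub_pos.2 (hh (Nat.lt_succ_self k))
  have hsd : Summable fun k => h k - h (k+1) := by
    rw [← summable_nat_add_iff 1]
    refine Summable.of_nonneg_of_le (fun k => (hd _).le) (fun k => ?_)
      ((summable_nat_add_iff 1).2 hsum)
    have := hd (k+1)
    push_cast
    nlinarith [(Nat.cast_nonneg k : (0:ℝ) ≤ k)]
  have hs2 : Summable fun k : ℕ => 4 * ((k:ℝ) + 1 + 1) * (h k - h (k+1)) := by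
    refine ((hsum.mul_left 4).add (hsd.mul_left 8)).congr fun k => ?_
    ring
  have hT : ∫⁻ p in Ω ∩ T, geoDist Ω z0 p < ⊤ := by
    refine (setLIntegral_mono (g := fun _ => ENNReal.ofReal (4 * ((0:ℕ) + 1))) measurable_const
      (fun p hp => hgeo 0 p hp.1 hp.2.2.1)).trans_lt ?_
    rw [setLIntegral_const]
    refine ENNReal.mul_lt_top ENNReal.ofReal_lt_top ((measure_mono inter_subset_right).trans_lt ?_)
    rw [aux_vol]
    exact ENNReal.mul_lt_top ENNReal.ofReal_lt_top ENNReal.ofReal_lt_top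
  have hS : ∀ k, ∫⁻ p in Ω ∩ S k, geoDist Ω z0 p ≤
      ENNReal.ofReal (4 * ((k:ℝ) + 1 + 1) * (h k - h (k+1))) := by
    intro k
    refine (setLIntegral_mono (g := fun _ => ENNReal.ofReal (4 * ((k+1:ℕ) + 1))) measurable_const
      (fun p hp => hgeo (k+1) p hp.1 hp.2.2.1)).trans ?_
    rw [setLIntegral_const, ENNReal.ofReal_mul (p := 4 * ((k:ℝ) + 1 + 1)) (by positivity)]
    rw [Nat.cast_add, Nat.cast_one]
    refine mul_le_mul' le_rfl ?_
    refine (measure_mono inter_subset_right).trans ?_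
    rw [aux_vol]
    simp
  calc ∫⁻ p in Ω, geoDist Ω z0 p ≤ ∫⁻ p in (Ω ∩ T) ∪ ⋃ k, (Ω ∩ S k), geoDist Ω z0 p :=
        lintegral_mono_set hcov
    _ ≤ (∫⁻ p in Ω ∩ T, geoDist Ω z0 p) + ∫⁻ p in ⋃ k, (Ω ∩ S k), geoDist Ω z0 p :=
        lintegral_union_le _ _ _
    _ ≤ (∫⁻ p in Ω ∩ T, geoDist Ω z0 p) + ∑' k, ∫⁻ p in Ω ∩ S k, geoDist Ω z0 p := by
        gcongr; exact lintegral_iUnion_le _ _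
    _ ≤ (∫⁻ p in Ω ∩ T, geoDist Ω z0 p) +
        ∑' k : ℕ, ENNReal.ofReal (4 * ((k:ℝ) + 1 + 1) * (h k - h (k+1))) := by
        gcongr with k; exact hS k
    _ < ⊤ := ENNReal.add_lt_top.2 ⟨hT, hs2.tsum_ofReal_lt_top⟩
end
end
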